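/- Let m ≥ 2, λ = (m−2)/2, and let M_ℓ be a Cl_{0,m}⊗ℂ-valued homogeneous polynomial of degree ℓ with ∂_x M_ℓ = 0 (a spherical monogenic of degree ℓ). Let f(x) = f₀(|x|) M_ℓ(x) and g(x) = f₀(|x|) x M_ℓ(x), where f₀ : [0,∞) → ℝ is such that f ∈ S(ℝ^m)⊗Cl_{0,m}. Then, with η = y/|y|, r = |x|, z = r|y|, the Clifford–Fourier transform F_− h(y) = (2π)^{−m/2}∫_{ℝ^m} K_−(x,y)h(x)dx satisfies: F_− f(y) = (−1)^ℓ M_ℓ(η) ∫₀^∞ r^{m+ℓ−1} f₀(r) z^{−λ} J_{ℓ+λ}(z) dr, and F_− g(y) = −i^m η M_ℓ(η) ∫₀^∞ r^{m+ℓ} f₀(r) z^{−λ} J_{ℓ+1+λ}(z) dr. -/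

import Mathlib

open scoped BigOperators
open MeasureTheory

noncomputable section

namespace CliffordFourier

/-- Concrete model of the complexified Clifford algebra `Cl_{0,m} ⊗ ℂ`:
an element is the family of its complex coefficients on the canonical basis
`e_S = e_{i₁} ⋯ e_{i_k}` (for `S = {i₁ < … < i_k} ⊆ {0,…,m-1}`). -/
def Cl (m : ℕ) : Type := Finset (Fin m) → ℂ

variable {m : ℕ}

instance : NormedAddCommGroup (Cl m) :=
  inferInstanceAs (NormedAddCommGroup (Finset (Fin m) → ℂ))
instance : NormedSpace ℝ (Cl m) :=
  inferInstanceAs (NormedSpace ℝ (Finset (Fin m) → ℂ))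
instance : Module ℂ (Cl m) := inferInstanceAs (Module ℂ (Finset (Fin m) → ℂ))
instance : CompleteSpace (Cl m) := inferInstanceAs (CompleteSpace (Finset (Fin m) → ℂ))

/-- The coefficient of `a` on the basis element `e_S`. -/
def coeff (a : Cl m) : Finset (Fin m) → ℂ := a

/-- Build an element of the Clifford algebra from its coefficients. -/
def ofCoeff (f : Finset (Fin m) → ℂ) : Cl m := f

/-- `1 = e_∅`. -/
instance : One (Cl m) := ⟨ofCoeff fun S => if S = (∅ : Finset (Fin m)) then 1 else 0⟩

/-- Clifford multiplication, determined by the relations `e_i e_j = - e_j e_i` (`i ≠ j`)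
and `e_i² = -1`; on basis elements it is given by
`e_T · e_U = (-1)^{#{(t,u) ∈ T×U : u < t}} · (-1)^{#(T∩U)} · e_{T Δ U}`. -/
instance : Mul (Cl m) :=
  ⟨fun a b => ofCoeff fun S => ∑ T : Finset (Fin m),
    ((-1 : ℂ) ^ ((((T ×ˢ (symmDiff T S)).filter fun p : Fin m × Fin m => p.2 < p.1).card)
        + (T ∩ (symmDiff T S)).card))
      * coeff a T * coeff b (symmDiff T S)⟩

/-- The generator `e_i`. -/
def e (m : ℕ) (i : Fin m) : Cl m := ofCoeff fun S => if S = {i} then 1 else 0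

/-- The embedding of a vector `x ∈ ℝ^m` as `x = Σ_i x_i e_i` in the Clifford algebra. -/
def vec (m : ℕ) (x : Fin m → ℝ) : Cl m := ∑ i : Fin m, (x i : ℂ) • e m i

/-- The Euclidean inner product `⟨x,y⟩ = Σ_i x_i y_i`. -/
def ip (x y : Fin m → ℝ) : ℝ := ∑ i, x i * y i

/-- The Euclidean norm `|x|`. -/
def nrm (x : Fin m → ℝ) : ℝ := Real.sqrt (ip x x)

/-- The wedge product `x∧y = Σ_{j<k} e_j e_k (x_j y_k - x_k y_j)`. -/
def wedge (m : ℕ) (x y : Fin m → ℝ) : Cl m :=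
  ∑ j : Fin m, ∑ k : Fin m,
    if j < k then ((x j * y k - x k * y j : ℝ) : ℂ) • (e m j * e m k) else 0

/-- Complex conjugation of the coefficients. -/
def cconj (a : Cl m) : Cl m := ofCoeff fun S => starRingEnd ℂ (coeff a S)

/-- The partial derivative `∂_{x_i}` of a Clifford-algebra-valued function. -/
def pder (i : Fin m) (f : (Fin m → ℝ) → Cl m) : (Fin m → ℝ) → Cl m :=
  fun x => fderiv ℝ f x (Pi.single i 1)

/-- The Dirac operator `∂_x = Σ_i e_i ∂_{x_i}`. -/
def dirac (f : (Fin m → ℝ) → Cl m) : (Fin m → ℝ) → Cl m :=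
  fun x => ∑ i : Fin m, e m i * pder i f x

/-- The Euler operator `E = Σ_i x_i ∂_{x_i}`. -/
def euler (f : (Fin m → ℝ) → Cl m) : (Fin m → ℝ) → Cl m :=
  fun x => ∑ i : Fin m, x i • pder i f x

/-- The Laplacian `Δ = Σ_i ∂_{x_i}²`. -/
def lapl (f : (Fin m → ℝ) → Cl m) : (Fin m → ℝ) → Cl m :=
  fun x => ∑ i : Fin m, pder i (pder i f) x

/-- The Gegenbauer polynomial `C_k^λ(w)`, defined through the standard three-term
recurrence, equivalent to the generating function `(1-2wt+t²)^{-λ} = Σ_k C_k^λ(w) t^k`. -/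
def geg (lam : ℝ) : ℕ → ℝ → ℝ
  | 0, _ => 1
  | 1, w => 2 * lam * w
  | (k+2), w => (2 * ((k : ℝ) + 1 + lam) * w * geg lam (k+1) w
      - ((k : ℝ) + 2 * lam) * geg lam k w) / ((k : ℝ) + 2)

/-- The Bessel function of the first kind
`J_a(z) = Σ_{j≥0} (-1)^j (z/2)^{2j+a} / (j! Γ(j+a+1))`. -/
def besselJ (a z : ℝ) : ℝ :=
  ∑' j : ℕ, ((-1 : ℝ)^j * (z/2) ^ (2*(j:ℝ) + a)) / (j.factorial * Real.Gamma ((j : ℝ) + a + 1))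

/-- The entire function `J̃_a(t) = t^{-a} J_a(t) = Σ_{j≥0} (-1)^j (t/2)^{2j} / (j! Γ(j+a+1) 2^a)`
(for `t > 0` this is literally `t^{-a} J_a(t)`). -/
def besselJt (a t : ℝ) : ℝ :=
  ∑' j : ℕ, ((-1 : ℝ)^j * (t/2) ^ (2*j)) / (j.factorial * Real.Gamma ((j : ℝ) + a + 1) * (2:ℝ)^a)

/-- The renormalized Gegenbauer polynomial `((k+λ)/λ) C_k^λ = C_k^{λ+1} - C_{k-2}^{λ+1}`
(the right-hand side also makes sense for `λ = 0`, i.e. `m = 2`). -/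
def gegT (lam : ℝ) (k : ℕ) (w : ℝ) : ℝ :=
  geg (lam + 1) k w - (if 2 ≤ k then geg (lam + 1) (k - 2) w else 0)

/-- `A_λ(w,z) = 2^{λ-1} Γ(λ+1) Σ_{k≥0} (u + (-1)^k) z^{-λ} J_{k+λ}(z) C_k^λ(w)`, where `u = i^m`;
here written using `z^{-λ} J_{k+λ}(z) = z^k J̃_{k+λ}(z)`, which makes the formula
well defined for all `z ≥ 0` (and all `m ≥ 2`). -/
def AfunR (u : ℂ) (lam w z : ℝ) : ℂ :=
  (((2:ℝ)^(lam - 1) * Real.Gamma (lam + 1) : ℝ) : ℂ) *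
    ∑' k : ℕ, (u + (-1 : ℂ)^k) * ((z^k * besselJt ((k : ℝ) + lam) z * geg lam k w : ℝ) : ℂ)

/-- `B_λ(w,z) = -2^{λ-1} Γ(λ) Σ_{k≥0} (k+λ)(u - (-1)^k) z^{-λ} J_{k+λ}(z) C_k^λ(w)`;
here written using `Γ(λ)(k+λ)C_k^λ = Γ(λ+1)(C_k^{λ+1} - C_{k-2}^{λ+1})` and
`z^{-λ} J_{k+λ}(z) = z^k J̃_{k+λ}(z)`, which makes the formula well defined
for all `z ≥ 0` and all `m ≥ 2` (including `λ = 0`). -/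
def BfunR (u : ℂ) (lam w z : ℝ) : ℂ :=
  -(((2:ℝ)^(lam - 1) * Real.Gamma (lam + 1) : ℝ) : ℂ) *
    ∑' k : ℕ, (u - (-1 : ℂ)^k) * ((z^k * besselJt ((k : ℝ) + lam) z * gegT lam k w : ℝ) : ℂ)

/-- `C_λ(w,z) = -2^{λ-1} Γ(λ) Σ_{k≥0} (u + (-1)^k) z^{-λ-1} J_{k+λ}(z) (C_k^λ)'(w)`;
here written using `Γ(λ) (C_k^λ)' = 2 Γ(λ+1) C_{k-1}^{λ+1}` and
`z^{-λ-1} J_{k+λ}(z) = z^{k-1} J̃_{k+λ}(z)`, which makes the formula well defined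
for all `z ≥ 0` and all `m ≥ 2` (including `λ = 0`). -/
def CfunR (u : ℂ) (lam w z : ℝ) : ℂ :=
  -(((2:ℝ)^lam * Real.Gamma (lam + 1) : ℝ) : ℂ) *
    ∑' k : ℕ, (u + (-1 : ℂ)^k) *
      ((z^(k - 1) * besselJt ((k : ℝ) + lam) z
        * (if 1 ≤ k then geg (lam + 1) (k - 1) w else 0) : ℝ) : ℂ)

/-- The Clifford-Fourier kernel
`K_-(x,y) = A_λ(w,z) + B_λ(w,z) + (x∧y) C_λ(w,z)`
with `λ = (m-2)/2`, `z = |x||y|`, `w = ⟨x,y⟩/(|x||y|)`. -/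
def Kminus (m : ℕ) (x y : Fin m → ℝ) : Cl m :=
  (AfunR (Complex.I ^ m) (((m:ℝ) - 2)/2) (ip x y / (nrm x * nrm y)) (nrm x * nrm y)
    + BfunR (Complex.I ^ m) (((m:ℝ) - 2)/2) (ip x y / (nrm x * nrm y)) (nrm x * nrm y)) • (1 : Cl m)
  + CfunR (Complex.I ^ m) (((m:ℝ) - 2)/2) (ip x y / (nrm x * nrm y)) (nrm x * nrm y) • wedge m x y

/-!
The Gegenbauer series defining `K_-(x, y)` can be rearranged, by `x ∧ y = -(y x) - ⟨x, y⟩`, into a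
series whose terms are radial functions of `|x||y|` times zonal functions of `ξ = x/|x|` and
`η = y/|y|`, where the zonal parts involve `C_k^{λ+1}`, `C_{k-1}^{λ+1}` and `C_{k-2}^{λ+1}` only.
Integrated over `ξ` against a solid harmonic `H` of degree `l`, the polynomial `C_k^{λ+1}(⟨ξ, η⟩)`
reproduces `H(η)`, up to the area of the sphere, if `k - l` is even and nonnegative, and gives `0`
otherwise.
Both a spherical monogenic `M` and `x M` are harmonic, and multiplication by `ξ` exchanges them on
the sphere up to sign; so for either of them the contributions of the three zonal parts telescope
and only the term `k = l`, respectively `k = l + 1`, of the kernel survives.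

The interchange of sum and integral rests on `|z^{-λ} J_{k+λ}(z)|` decaying in `k` faster than any
power, up to a power of `1 + |z|`. This follows from the Hecke–Bochner formula, which writes the
function as an integral over the sphere of a bounded function.
-/

/-! ### The Clifford algebra -/

section Algebra

instance : NormedSpace ℂ (Cl m) := inferInstanceAs (NormedSpace ℂ (Finset (Fin m) → ℂ))

instance : FiniteDimensional ℝ (Cl m) :=
  inferInstanceAs (FiniteDimensional ℝ (Finset (Fin m) → ℂ))

instance : IsScalarTower ℝ ℂ (Cl m) := inferInstanceAs (IsScalarTower ℝ ℂ (Finset (Fin m) → ℂ))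

lemma ofReal_smul {V : Type*} [AddCommGroup V] [Module ℝ V] [Module ℂ V] [IsScalarTower ℝ ℂ V]
    (c : ℝ) (v : V) : (c : ℂ) • v = c • v :=
  algebraMap_smul ℂ c v

lemma prod_symmDiff_of_mul_self_eq_one {ι R : Type*} [DecidableEq ι] [CommRing R] {f : ι → R}
    (hf : ∀ i, f i * f i = 1) (A B : Finset ι) :
    ∏ i ∈ symmDiff A B, f i = (∏ i ∈ A, f i) * ∏ i ∈ B, f i := by
  have hsymm : (∏ i ∈ symmDiff A B, f i) = (∏ i ∈ A \ B, f i) * ∏ i ∈ B \ A, f i := by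
    rw [symmDiff_def, Finset.sup_eq_union, Finset.prod_union disjoint_sdiff_sdiff]
  have hinter : (∏ i ∈ A ∩ B, f i) * (∏ i ∈ A ∩ B, f i) = 1 := by
    rw [← Finset.prod_mul_distrib]; exact Finset.prod_eq_one fun i _ => hf i
  rw [hsymm, ← Finset.prod_inter_mul_prod_sdiff A B f, ← Finset.prod_inter_mul_prod_sdiff B A f,
    Finset.inter_comm B A]
  linear_combination (-(∏ i ∈ A \ B, f i) * ∏ i ∈ B \ A, f i) * hinter

/-- The sign in `e_T e_U = basisSign T U • e_{T Δ U}`. Written as a product over pairs, it is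
visibly bimultiplicative for the symmetric difference, which is what makes `Cl m` associative. -/
def basisSign (T U : Finset (Fin m)) : ℂ := ∏ t ∈ T, ∏ u ∈ U, if u ≤ t then -1 else 1

lemma basisSign_mul_self (T U : Finset (Fin m)) : basisSign T U * basisSign T U = 1 := by
  simp_rw [basisSign, ← Finset.prod_mul_distrib]
  refine Finset.prod_eq_one fun t _ => Finset.prod_eq_one fun u _ => ?_
  split_ifs <;> norm_num

lemma basisSign_symmDiff_left (T T' U : Finset (Fin m)) :
    basisSign (symmDiff T T') U = basisSign T U * basisSign T' U := by
  refine prod_symmDiff_of_mul_self_eq_one (fun t => ?_) T T'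
  rw [← Finset.prod_mul_distrib]
  refine Finset.prod_eq_one fun u _ => ?_
  split_ifs <;> norm_num

lemma basisSign_symmDiff_right (T U U' : Finset (Fin m)) :
    basisSign T (symmDiff U U') = basisSign T U * basisSign T U' := by
  simp_rw [basisSign, ← Finset.prod_mul_distrib]
  refine Finset.prod_congr rfl fun t _ => prod_symmDiff_of_mul_self_eq_one (fun u => ?_) U U'
  split_ifs <;> norm_num

lemma basisSign_singleton (i j : Fin m) : basisSign {i} {j} = if j ≤ i then -1 else 1 := by
  simp [basisSign]

lemma basisSign_empty_left (U : Finset (Fin m)) : basisSign ∅ U = 1 := by simp [basisSign]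

lemma basisSign_empty_right (T : Finset (Fin m)) : basisSign T ∅ = 1 := by simp [basisSign]

lemma neg_one_pow_inversions_eq_basisSign (T U : Finset (Fin m)) :
    (-1 : ℂ) ^ (((T ×ˢ U).filter fun p : Fin m × Fin m => p.2 < p.1).card + (T ∩ U).card)
      = basisSign T U := by
  have hdiag : (T ∩ U).card = ((T ×ˢ U).filter fun p : Fin m × Fin m => p.1 = p.2).card := by
    refine Finset.card_bij (fun a _ => (a, a)) (fun a ha => ?_) (fun a _ b _ h => ?_) ?_
    · simpa using ha
    · simpa using h
    · rintro ⟨a, b⟩ h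
      obtain ⟨⟨ha, hb⟩, rfl⟩ : (a ∈ T ∧ b ∈ U) ∧ a = b := by simpa using h
      exact ⟨a, by simp [ha, hb], rfl⟩
  have hle (p : Fin m × Fin m) : (if p.2 ≤ p.1 then (-1 : ℂ) else 1)
      = (if p.2 < p.1 then -1 else 1) * (if p.1 = p.2 then -1 else 1) := by
    rcases lt_trichotomy p.2 p.1 with h | h | h
    · simp [h, h.le, h.ne']
    · simp [h]
    · simp [h.not_ge, h.not_gt, h.ne]
  calc _ = ∏ p ∈ T ×ˢ U, if p.2 ≤ p.1 then (-1 : ℂ) else 1 := by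
        simp_rw [hle]
        rw [Finset.prod_mul_distrib, ← Finset.prod_filter, ← Finset.prod_filter,
          Finset.prod_const, Finset.prod_const, pow_add, hdiag]
    _ = basisSign T U := Finset.prod_product _ _ _

@[ext] lemma Cl.ext {a b : Cl m} (h : ∀ S, coeff a S = coeff b S) : a = b := funext h

lemma coeff_add (a b : Cl m) (S : Finset (Fin m)) : coeff (a + b) S = coeff a S + coeff b S := rfl

lemma coeff_neg (a : Cl m) (S : Finset (Fin m)) : coeff (-a) S = -coeff a S := rfl

lemma coeff_zero (S : Finset (Fin m)) : coeff (0 : Cl m) S = 0 := rfl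

lemma coeff_smul (c : ℂ) (a : Cl m) (S : Finset (Fin m)) : coeff (c • a) S = c * coeff a S := rfl

lemma coeff_one (S : Finset (Fin m)) : coeff (1 : Cl m) S = if S = ∅ then 1 else 0 := rfl

lemma coeff_e (i : Fin m) (S : Finset (Fin m)) : coeff (e m i) S = if S = {i} then 1 else 0 := rfl

lemma coeff_mul (a b : Cl m) (S : Finset (Fin m)) :
    coeff (a * b) S = ∑ T, basisSign T (symmDiff T S) * coeff a T * coeff b (symmDiff T S) := by
  simp_rw [← neg_one_pow_inversions_eq_basisSign]
  rfl

lemma Cl.one_mul (a : Cl m) : 1 * a = a := by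
  ext S
  rw [coeff_mul, Finset.sum_eq_single ∅]
  · rw [coeff_one, if_pos rfl, basisSign_empty_left, _root_.one_mul, _root_.one_mul,
      ← Finset.bot_eq_empty, bot_symmDiff]
  · intro T _ hT
    simp [coeff_one, hT]
  · simp

lemma Cl.mul_one (a : Cl m) : a * 1 = a := by
  ext S
  rw [coeff_mul, Finset.sum_eq_single S]
  · rw [symmDiff_self, Finset.bot_eq_empty, coeff_one, if_pos rfl, basisSign_empty_right,
      _root_.one_mul, _root_.mul_one]
  · intro T _ hT
    have hTS : symmDiff T S ≠ ∅ := by rwa [← Finset.bot_eq_empty, Ne, symmDiff_eq_bot]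
    simp [coeff_one, hTS]
  · simp

lemma basisSign_cocycle (R S T : Finset (Fin m)) :
    basisSign T (symmDiff T S) * basisSign R (symmDiff R T)
      = basisSign R (symmDiff R S) * basisSign (symmDiff R T) (symmDiff T S) := by
  simp only [basisSign_symmDiff_left, basisSign_symmDiff_right]
  linear_combination (-basisSign R R * basisSign R T * basisSign T T * basisSign T S)
    * basisSign_mul_self R S

lemma Cl.mul_assoc (a b c : Cl m) : a * b * c = a * (b * c) := by
  ext S
  simp_rw [coeff_mul, Finset.mul_sum, Finset.sum_mul]
  rw [Finset.sum_comm]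
  refine Finset.sum_congr rfl fun R _ => ?_
  refine Fintype.sum_equiv (symmDiff_right_involutive R).toPerm _ _ fun T => ?_
  have hTS : symmDiff (symmDiff R T) (symmDiff R S) = symmDiff T S := by
    rw [symmDiff_comm R T, symmDiff_assoc, symmDiff_symmDiff_cancel_left]
  simp only [Function.Involutive.coe_toPerm, hTS]
  linear_combination (coeff a R * coeff b (symmDiff R T) * coeff c (symmDiff T S))
    * basisSign_cocycle R S T

namespace Cl

-- Scoped, since instance search would otherwise find the additive group and the scalar actions of
-- `Cl m` through the ring structure instead of the normed space structure.
scoped instance : Ring (Cl m) where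
  __ := (inferInstance : AddCommGroup (Cl m))
  mul_assoc := Cl.mul_assoc
  one_mul := Cl.one_mul
  mul_one := Cl.mul_one
  zero_mul a := by ext S; simp [coeff_mul, coeff_zero]
  mul_zero a := by ext S; simp [coeff_mul, coeff_zero]
  left_distrib a b c := by
    ext S; simp only [coeff_mul, coeff_add, mul_add, Finset.sum_add_distrib]
  right_distrib a b c := by
    ext S; simp only [coeff_mul, coeff_add, mul_add, add_mul, Finset.sum_add_distrib]

lemma smul_mul (r : ℂ) (a b : Cl m) : r • a * b = r • (a * b) := by
  ext S
  simp only [coeff_mul, coeff_smul, Finset.mul_sum]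
  exact Finset.sum_congr rfl fun T _ => by ring

lemma mul_smul (r : ℂ) (a b : Cl m) : a * r • b = r • (a * b) := by
  ext S
  simp only [coeff_mul, coeff_smul, Finset.mul_sum]
  exact Finset.sum_congr rfl fun T _ => by ring

scoped instance : Algebra ℂ (Cl m) := Algebra.ofModule Cl.smul_mul Cl.mul_smul

scoped instance : Algebra ℝ (Cl m) :=
  Algebra.ofModule (fun r a b => by simp only [← ofReal_smul r, smul_mul_assoc])
    (fun r a b => by simp only [← ofReal_smul r, mul_smul_comm])

end Cl

open scoped Cl

lemma coeff_e_mul (i : Fin m) (a : Cl m) (S : Finset (Fin m)) :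
    coeff (e m i * a) S = basisSign {i} (symmDiff {i} S) * coeff a (symmDiff {i} S) := by
  rw [coeff_mul, Finset.sum_eq_single {i}]
  · simp [coeff_e]
  · intro T _ hT
    simp [coeff_e, hT]
  · simp

lemma e_mul_e_self (i : Fin m) : e m i * e m i = -1 := by
  ext S
  rw [coeff_e_mul, coeff_e, coeff_neg, coeff_one]
  by_cases hS : S = ∅
  · simp [hS, ← Finset.bot_eq_empty, basisSign_singleton]
  · rw [if_neg hS, if_neg, mul_zero, neg_zero]
    rwa [symmDiff_eq_left, Finset.bot_eq_empty]

lemma e_mul_e_anticomm {i j : Fin m} (hij : i ≠ j) : e m i * e m j = -(e m j * e m i) := by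
  ext S
  rw [coeff_neg, coeff_e_mul, coeff_e_mul, coeff_e, coeff_e]
  by_cases hS : S = symmDiff {i} {j}
  · have hsign : basisSign {i} {j} = -basisSign {j} {i} := by
      rw [basisSign_singleton, basisSign_singleton]
      rcases hij.lt_or_gt with h | h <;> simp [h.le, h.not_ge]
    subst hS
    rw [symmDiff_symmDiff_cancel_left, symmDiff_comm ({i} : Finset (Fin m)),
      symmDiff_symmDiff_cancel_left, if_pos rfl, if_pos rfl, hsign, mul_one, mul_one]
  · have hji : symmDiff {i} S ≠ {j} := fun h => hS (by rw [← h, symmDiff_symmDiff_cancel_left])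
    have hij' : symmDiff {j} S ≠ {i} := fun h =>
      hS (by rw [← h, symmDiff_comm ({j} : Finset (Fin m)), symmDiff_symmDiff_cancel_right])
    rw [if_neg hji, if_neg hij', mul_zero, mul_zero, neg_zero]

lemma vec_mul_vec (x y : Fin m → ℝ) :
    vec m x * vec m y = ∑ i, ∑ j, ((x i * y j : ℝ) : ℂ) • (e m i * e m j) := by
  simp only [vec, Finset.sum_mul_sum, smul_mul_smul_comm, Complex.ofReal_mul]

lemma sum_sum_eq_sum_lt_add_sum_diag {ι V : Type*} [Fintype ι] [LinearOrder ι] [AddCommGroup V]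
    (F : ι → ι → V) :
    ∑ i, ∑ j, F i j = (∑ i, ∑ j, if i < j then F i j + F j i else 0) + ∑ i, F i i := by
  have hsplit (i j : ι) : F i j = (if i < j then F i j else 0) + (if j < i then F i j else 0)
      + (if i = j then F i j else 0) := by
    rcases lt_trichotomy i j with h | h | h
    · simp [h, h.not_gt, h.ne]
    · simp [h]
    · simp [h, h.not_gt, h.ne']
  have hadd (i j : ι) : (if i < j then F i j + F j i else 0)
      = (if i < j then F i j else 0) + (if i < j then F j i else 0) := by
    split_ifs <;> simp
  rw [Finset.sum_congr rfl fun i _ => Finset.sum_congr rfl fun j _ => hsplit i j]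
  simp_rw [hadd, Finset.sum_add_distrib, Finset.sum_ite_eq, Finset.mem_univ, if_true]
  congr 2
  exact Finset.sum_comm

lemma wedge_eq (x y : Fin m → ℝ) :
    wedge m x y = -(vec m y * vec m x) - (ip x y : ℂ) • (1 : Cl m) := by
  have hdiag : ∑ i, ((y i * x i : ℝ) : ℂ) • (e m i * e m i) = -((ip x y : ℂ) • (1 : Cl m)) := by
    simp only [e_mul_e_self, smul_neg, Finset.sum_neg_distrib, ← Finset.sum_smul, ip,
      Complex.ofReal_sum, mul_comm (y _)]
  rw [vec_mul_vec, sum_sum_eq_sum_lt_add_sum_diag, hdiag, neg_add, neg_neg, add_sub_cancel_right,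
    wedge, ← Finset.sum_neg_distrib]
  refine Finset.sum_congr rfl fun i _ => ?_
  rw [← Finset.sum_neg_distrib]
  refine Finset.sum_congr rfl fun j _ => ?_
  split_ifs with h
  · rw [e_mul_e_anticomm h.ne']
    push_cast
    module
  · rw [neg_zero]

lemma wedge_self (x : Fin m → ℝ) : wedge m x x = 0 := by
  simp [wedge, mul_comm]

lemma vec_mul_self (x : Fin m → ℝ) : vec m x * vec m x = -((ip x x : ℂ) • (1 : Cl m)) := by
  have h := wedge_eq x x
  rw [wedge_self, eq_comm, sub_eq_zero] at h
  rw [← h, neg_neg]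

end Algebra

/-! ### Gegenbauer polynomials -/

section Gegenbauer

open PowerSeries (C X derivative)

/-- The sequence `k ↦ f (k - j)`, extended by `0` to `k < j`. -/
def shift {α : Type*} [Zero α] (j : ℕ) (f : ℕ → α) (k : ℕ) : α := if j ≤ k then f (k - j) else 0

/-- The Gegenbauer polynomial `C_{k-j}^μ`, with the convention that it vanishes for `k < j`. -/
def gegShift (mu : ℝ) (j k : ℕ) (w : ℝ) : ℝ := shift j (fun i => geg mu i w) k

/-- The differential equation `(1 - 2wX + X²) F' = 2μ (w - X) F` satisfied by the generating series
`(1 - 2wX + X²)^(-μ)` of the Gegenbauer polynomials. -/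
def GegenbauerODE (mu w : ℂ) (F : PowerSeries ℂ) : Prop :=
  (1 - C (2 * w) * X + X * X) * derivative ℂ F = C (2 * mu) * (C w - X) * F

lemma gegenbauerODE_iff (mu w : ℂ) (F : PowerSeries ℂ) :
    GegenbauerODE mu w F ↔
      PowerSeries.coeff 1 F = 2 * mu * w * PowerSeries.coeff 0 F ∧
      ∀ n : ℕ, (n + 2) * PowerSeries.coeff (n + 2) F
        = 2 * (n + 1 + mu) * w * PowerSeries.coeff (n + 1) F
          - (n + 2 * mu) * PowerSeries.coeff n F := by
  have hexpand : (1 - C (2 * w) * X + X * X) * derivative ℂ F - C (2 * mu) * (C w - X) * F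
      = derivative ℂ F - C (2 * w) * (X * derivative ℂ F) + X * (X * derivative ℂ F)
        - C (2 * mu * w) * F + C (2 * mu) * (X * F) := by
    simp only [map_mul]; ring
  rw [GegenbauerODE, ← sub_eq_zero, hexpand, PowerSeries.ext_iff, ← Nat.and_forall_add_one]
  refine and_congr ?_ (forall_congr' fun n => ?_)
  · simp only [map_add, map_sub, map_zero, PowerSeries.coeff_C_mul, PowerSeries.coeff_zero_X_mul,
      PowerSeries.coeff_derivative]
    rw [← sub_eq_zero (b := 2 * mu * w * _)]
    push_cast
    ring_nf
  · simp only [map_add, map_sub, map_zero, PowerSeries.coeff_C_mul, PowerSeries.coeff_succ_X_mul,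
      PowerSeries.coeff_derivative]
    rw [← sub_eq_zero (a := ((n : ℂ) + 2) * _)]
    cases n with
    | zero => simp; ring_nf
    | succ k =>
      rw [PowerSeries.coeff_succ_X_mul, PowerSeries.coeff_derivative]
      push_cast
      ring_nf

lemma geg_succ_succ (mu w : ℝ) (n : ℕ) :
    (n + 2) * geg mu (n + 2) w
      = 2 * (n + 1 + mu) * w * geg mu (n + 1) w - (n + 2 * mu) * geg mu n w := by
  rw [geg, mul_div_cancel₀ _ (by positivity)]

lemma gegenbauerODE_geg (mu w : ℝ) :
    GegenbauerODE mu w (PowerSeries.mk fun k => (geg mu k w : ℂ)) := by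
  refine (gegenbauerODE_iff _ _ _).mpr ⟨by simp [geg], fun n => ?_⟩
  simp only [PowerSeries.coeff_mk]
  exact_mod_cast geg_succ_succ mu w n

lemma GegenbauerODE.coeff_eq_geg {mu w : ℝ} {F : PowerSeries ℂ} (h : GegenbauerODE mu w F)
    (h0 : PowerSeries.coeff 0 F = 1) (k : ℕ) : PowerSeries.coeff k F = (geg mu k w : ℂ) := by
  obtain ⟨h1, hrec⟩ := (gegenbauerODE_iff _ _ _).mp h
  induction k using Nat.twoStepInduction with
  | zero => simp [geg, h0]
  | one => simp [geg, h1, h0]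
  | more n ih ih' =>
    have hn : (n : ℂ) + 2 ≠ 0 := by exact_mod_cast (by lia : n + 2 ≠ 0)
    have hgeg : ((n : ℂ) + 2) * geg mu (n + 2) w
        = 2 * (n + 1 + mu) * w * geg mu (n + 1) w - (n + 2 * mu) * geg mu n w := by
      exact_mod_cast geg_succ_succ mu w n
    rw [← mul_right_inj' hn, hrec, ih, ih', hgeg]

lemma GegenbauerODE.quadratic_mul {mu w : ℂ} {F : PowerSeries ℂ} (h : GegenbauerODE (mu + 1) w F) :
    GegenbauerODE mu w ((1 - C (2 * w) * X + X * X) * F) := by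
  unfold GegenbauerODE at *
  set Q : PowerSeries ℂ := 1 - C (2 * w) * X + X * X with hQ
  have h2 : (C (2 : ℂ) : PowerSeries ℂ) = 2 := map_ofNat _ 2
  have hQ' : derivative ℂ Q = -C 2 * (C w - X) := by
    rw [hQ, map_add, map_sub, Derivation.map_one_eq_zero, Derivation.leibniz, Derivation.leibniz,
      PowerSeries.derivative_C, PowerSeries.derivative_X]
    simp only [map_mul, h2, smul_eq_mul]
    ring
  rw [Derivation.leibniz, hQ']
  simp only [smul_eq_mul, map_mul, map_add, map_one] at *
  linear_combination Q * h

lemma coeff_X_pow_mul_mk_geg (mu w : ℝ) (j k : ℕ) :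
    PowerSeries.coeff k (X ^ j * PowerSeries.mk fun i => (geg mu i w : ℂ) : PowerSeries ℂ)
      = gegShift mu j k w := by
  rw [PowerSeries.coeff_X_pow_mul', gegShift, shift]
  split_ifs <;> simp

lemma geg_eq_gegShift (lam w : ℝ) (k : ℕ) :
    geg lam k w = gegShift (lam + 1) 0 k w - 2 * w * gegShift (lam + 1) 1 k w
      + gegShift (lam + 1) 2 k w := by
  set F : PowerSeries ℂ := PowerSeries.mk fun k => (geg (lam + 1) k w : ℂ) with hF
  have hODE : GegenbauerODE lam w ((1 - C (2 * (w : ℂ)) * X + X * X) * F) := by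
    have h := gegenbauerODE_geg (lam + 1) w
    push_cast at h
    exact h.quadratic_mul
  have hexpand : (1 - C (2 * (w : ℂ)) * X + X * X) * F
      = X ^ 0 * F - C (2 * (w : ℂ)) * (X ^ 1 * F) + X ^ 2 * F := by ring
  have hcoeff := hODE.coeff_eq_geg (by simp [hF, geg]) k
  rw [hexpand, map_add, map_sub, PowerSeries.coeff_C_mul, coeff_X_pow_mul_mk_geg,
    coeff_X_pow_mul_mk_geg, coeff_X_pow_mul_mk_geg] at hcoeff
  exact_mod_cast hcoeff.symm

lemma gegT_eq_gegShift (lam w : ℝ) (k : ℕ) :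
    gegT lam k w = gegShift (lam + 1) 0 k w - gegShift (lam + 1) 2 k w := by
  simp [gegT, gegShift, shift]

/-- The coefficient `(μ)_n / n!` of `t^n` in the binomial series `(1 - t)^(-μ)`. -/
def binomialCoeff (mu : ℝ) (n : ℕ) : ℝ := (ascPochhammer ℝ n).eval mu / n.factorial

lemma binomialCoeff_zero (mu : ℝ) : binomialCoeff mu 0 = 1 := by simp [binomialCoeff]

lemma binomialCoeff_succ (mu : ℝ) (n : ℕ) :
    binomialCoeff mu (n + 1) = binomialCoeff mu n * ((n + mu) / (n + 1)) := by
  rw [binomialCoeff, ascPochhammer_succ_eval, Nat.factorial_succ, binomialCoeff]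
  push_cast
  field_simp
  ring

lemma binomialCoeff_nonneg {mu : ℝ} (h : 0 ≤ mu) (n : ℕ) : 0 ≤ binomialCoeff mu n := by
  induction n with
  | zero => simp [binomialCoeff_zero]
  | succ n ih => rw [binomialCoeff_succ]; positivity

lemma binomialCoeff_le {mu : ℝ} (h : 0 ≤ mu) {p : ℕ} (hp : mu ≤ p) (n : ℕ) :
    binomialCoeff mu n ≤ ((n : ℝ) + 1) ^ p := by
  induction n with
  | zero => simp [binomialCoeff_zero]
  | succ n ih =>
    have bernoulli : 1 + (p : ℝ) * (1 / ((n : ℝ) + 1)) ≤ (1 + 1 / ((n : ℝ) + 1)) ^ p :=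
      one_add_mul_le_pow (le_trans (by norm_num) (by positivity : (0 : ℝ) ≤ 1 / ((n : ℝ) + 1))) p
    have hratio : ((n : ℝ) + mu) / (n + 1) ≤ 1 + (p : ℝ) * (1 / ((n : ℝ) + 1)) := by
      rw [div_le_iff₀ (by positivity)]; field_simp; linarith
    calc binomialCoeff mu (n + 1) = binomialCoeff mu n * ((n + mu) / (n + 1)) :=
          binomialCoeff_succ mu n
      _ ≤ ((n : ℝ) + 1) ^ p * (1 + 1 / ((n : ℝ) + 1)) ^ p :=
          mul_le_mul ih (hratio.trans bernoulli) (by positivity) (by positivity)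
      _ = (((n + 1 : ℕ) : ℝ) + 1) ^ p := by
          rw [← mul_pow]; congr 1; push_cast; field_simp

/-- The binomial series `(1 - zX)^(-μ)`. -/
def binomialPowerSeries (mu : ℝ) (z : ℂ) : PowerSeries ℂ :=
  PowerSeries.mk fun n => (binomialCoeff mu n : ℂ) * z ^ n

lemma derivative_binomialPowerSeries (mu : ℝ) (z : ℂ) :
    (1 - C z * X) * derivative ℂ (binomialPowerSeries mu z)
      = C (mu * z) * binomialPowerSeries mu z := by
  rw [sub_mul, one_mul, mul_assoc]
  ext n
  simp only [map_sub, PowerSeries.coeff_C_mul, PowerSeries.coeff_derivative, binomialPowerSeries]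
  cases n with
  | zero => simp [binomialCoeff_succ, binomialCoeff_zero]
  | succ n =>
    rw [PowerSeries.coeff_succ_X_mul, PowerSeries.coeff_derivative]
    have hn : (n : ℂ) + 1 ≠ 0 := by exact_mod_cast (by lia : n + 1 ≠ 0)
    have hn' : (n : ℂ) + 1 + 1 ≠ 0 := by exact_mod_cast (by lia : n + 1 + 1 ≠ 0)
    simp only [PowerSeries.coeff_mk, binomialCoeff_succ]
    push_cast
    field_simp
    ring

lemma gegenbauerODE_binomialPowerSeries_mul (mu : ℝ) {z z' w : ℂ} (hmul : z * z' = 1)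
    (hadd : z + z' = 2 * w) :
    GegenbauerODE mu w (binomialPowerSeries mu z * binomialPowerSeries mu z') := by
  have hz := derivative_binomialPowerSeries mu z
  have hz' := derivative_binomialPowerSeries mu z'
  set P := binomialPowerSeries mu z
  set P' := binomialPowerSeries mu z'
  rw [GegenbauerODE, Derivation.leibniz]
  have hCmul := congrArg (C (R := ℂ)) hmul
  have hCadd := congrArg (C (R := ℂ)) hadd
  have h2 : (C (2 : ℂ) : PowerSeries ℂ) = 2 := map_ofNat _ 2
  simp only [smul_eq_mul, map_mul, map_add, map_one, h2] at *
  have hfactor : (1 - 2 * C w * X + X * X : PowerSeries ℂ) = (1 - C z * X) * (1 - C z' * X) := by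
    linear_combination X * hCadd - X * X * hCmul
  rw [hfactor]
  linear_combination (1 - C z * X) * P * hz' + (1 - C z' * X) * P' * hz
    + C (mu : ℂ) * P * P' * hCadd - 2 * C (mu : ℂ) * P * P' * X * hCmul

lemma norm_coeff_binomialPowerSeries_le {mu : ℝ} (h : 0 ≤ mu) {p : ℕ} (hp : mu ≤ p) {z : ℂ}
    (hz : ‖z‖ = 1) (n : ℕ) :
    ‖PowerSeries.coeff n (binomialPowerSeries mu z)‖ ≤ ((n : ℝ) + 1) ^ p := by
  rw [binomialPowerSeries, PowerSeries.coeff_mk, norm_mul, norm_pow, hz, one_pow, mul_one,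
    Complex.norm_real, Real.norm_of_nonneg (binomialCoeff_nonneg h n)]
  exact binomialCoeff_le h hp n

/- With `w = cos θ`, the factorisation `1 - 2wX + X² = (1 - e^{iθ}X)(1 - e^{-iθ}X)` expresses the
generating series as a product of two binomial series on the unit circle. -/
lemma exists_abs_geg_le {mu : ℝ} (h : 0 ≤ mu) :
    ∃ q : ℕ, ∀ (k : ℕ) (w : ℝ), |w| ≤ 1 → |geg mu k w| ≤ ((k : ℝ) + 1) ^ q := by
  obtain ⟨p, hp⟩ := exists_nat_ge mu
  refine ⟨1 + (p + p), fun k w hw => ?_⟩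
  set z : ℂ := Complex.exp (Real.arccos w * Complex.I) with hz
  set z' : ℂ := Complex.exp (-(Real.arccos w * Complex.I)) with hz'
  have hmul : z * z' = 1 := by rw [hz, hz', ← Complex.exp_add]; simp
  have hadd : z + z' = 2 * w := by
    have hcos : (w : ℂ) = Complex.cos (Real.arccos w) := by
      rw [← Complex.ofReal_cos, Real.cos_arccos (abs_le.mp hw).1 (abs_le.mp hw).2]
    rw [hcos, Complex.cos, hz, hz', neg_mul]; ring
  have hnorm : ‖z‖ = 1 := by rw [hz, Complex.norm_exp_ofReal_mul_I]
  have hnorm' : ‖z'‖ = 1 := by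
    rw [hz', ← neg_mul, ← Complex.ofReal_neg, Complex.norm_exp_ofReal_mul_I]
  have hcoeff := (gegenbauerODE_binomialPowerSeries_mul mu hmul hadd).coeff_eq_geg
    (by simp [binomialPowerSeries, binomialCoeff_zero]) k
  have hterm (ij : ℕ × ℕ) (hij : ij ∈ Finset.HasAntidiagonal.antidiagonal k) :
      ‖PowerSeries.coeff ij.1 (binomialPowerSeries mu z)
        * PowerSeries.coeff ij.2 (binomialPowerSeries mu z')‖ ≤ ((k : ℝ) + 1) ^ (p + p) := by
    have hsum := Finset.HasAntidiagonal.mem_antidiagonal.mp hij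
    rw [norm_mul, pow_add]
    gcongr
    · refine (norm_coeff_binomialPowerSeries_le h hp hnorm _).trans ?_
      gcongr; lia
    · refine (norm_coeff_binomialPowerSeries_le h hp hnorm' _).trans ?_
      gcongr; lia
  rw [← Real.norm_eq_abs, ← Complex.norm_real, ← hcoeff, PowerSeries.coeff_mul]
  refine ((norm_sum_le _ _).trans (Finset.sum_le_card_nsmul _ _ _ hterm)).trans_eq ?_
  rw [Finset.Nat.card_antidiagonal, nsmul_eq_mul, pow_add _ 1, pow_one, Nat.cast_succ]

lemma continuous_geg (mu : ℝ) (k : ℕ) : Continuous (geg mu k) := by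
  induction k using Nat.twoStepInduction with
  | zero => exact continuous_const
  | one => exact continuous_const.mul continuous_id
  | more n ih ih' => simp only [geg]; fun_prop

lemma continuous_gegShift (mu : ℝ) (j k : ℕ) : Continuous (gegShift mu j k) := by
  unfold gegShift shift
  split_ifs
  exacts [continuous_geg mu _, continuous_const]

lemma exists_abs_gegShift_le {mu : ℝ} (hmu : 0 ≤ mu) :
    ∃ q : ℕ, ∀ (j k : ℕ) (w : ℝ), |w| ≤ 1 → |gegShift mu j k w| ≤ (k + 1) ^ q := by
  obtain ⟨q, hq⟩ := exists_abs_geg_le hmu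
  refine ⟨q, fun j k w hw => ?_⟩
  unfold gegShift shift
  split_ifs with hjk
  · refine (hq _ w hw).trans ?_
    gcongr
    exact Nat.sub_le k j
  · rw [abs_zero]
    positivity

end Gegenbauer

/-! ### Polar coordinates and Gaussian integrals -/

section Euclidean

lemma nrm_eq_norm_toLp (x : Fin m → ℝ) :
    nrm x = ‖(WithLp.toLp 2 x : EuclideanSpace ℝ (Fin m))‖ := by
  simp [EuclideanSpace.norm_eq, nrm, ip, sq]

lemma ip_eq_inner_toLp (x y : Fin m → ℝ) :
    ip x y = inner ℝ (WithLp.toLp 2 x : EuclideanSpace ℝ (Fin m)) (WithLp.toLp 2 y) := by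
  simp [ip, PiLp.inner_apply, mul_comm]

lemma nrm_sq (x : Fin m → ℝ) : nrm x ^ 2 = ip x x :=
  Real.sq_sqrt (Finset.sum_nonneg fun _ _ => mul_self_nonneg _)

lemma nrm_nonneg (x : Fin m → ℝ) : 0 ≤ nrm x := Real.sqrt_nonneg _

lemma nrm_pos {x : Fin m → ℝ} (hx : x ≠ 0) : 0 < nrm x := by
  simpa [nrm_eq_norm_toLp] using hx

lemma norm_le_nrm (x : Fin m → ℝ) : ‖x‖ ≤ nrm x := by
  rw [nrm_eq_norm_toLp]
  exact (pi_norm_le_iff_of_nonneg (norm_nonneg _)).mpr fun i =>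
    PiLp.norm_apply_le (WithLp.toLp 2 x : EuclideanSpace ℝ (Fin m)) i

lemma nrm_smul (c : ℝ) (x : Fin m → ℝ) : nrm (c • x) = |c| * nrm x := by
  rw [nrm_eq_norm_toLp, nrm_eq_norm_toLp, WithLp.toLp_smul, norm_smul, Real.norm_eq_abs]

lemma nrm_inv_nrm_smul {x : Fin m → ℝ} (hx : x ≠ 0) : nrm ((nrm x)⁻¹ • x) = 1 := by
  rw [nrm_smul, abs_inv, abs_of_pos (nrm_pos hx), inv_mul_cancel₀ (nrm_pos hx).ne']

lemma ip_comm (x y : Fin m → ℝ) : ip x y = ip y x := by simp [ip, mul_comm]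

lemma ip_smul_left (c : ℝ) (x y : Fin m → ℝ) : ip (c • x) y = c * ip x y := by
  simp [ip, Finset.mul_sum, mul_assoc]

lemma ip_smul_right (c : ℝ) (x y : Fin m → ℝ) : ip x (c • y) = c * ip x y := by
  rw [ip_comm, ip_smul_left, ip_comm]

lemma ip_self_of_nrm_eq_one {x : Fin m → ℝ} (hx : nrm x = 1) : ip x x = 1 := by
  rw [← nrm_sq, hx, one_pow]

lemma abs_ip_le (x y : Fin m → ℝ) : |ip x y| ≤ nrm x * nrm y := by
  rw [ip_eq_inner_toLp, nrm_eq_norm_toLp, nrm_eq_norm_toLp]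
  exact abs_real_inner_le_norm _ _

lemma abs_ip_le_one {x y : Fin m → ℝ} (hx : nrm x = 1) (hy : nrm y = 1) : |ip x y| ≤ 1 := by
  simpa [hx, hy] using abs_ip_le x y

lemma continuous_ip_left (y : Fin m → ℝ) : Continuous fun x => ip x y := by
  unfold ip; fun_prop

lemma continuous_nrm : Continuous (nrm : (Fin m → ℝ) → ℝ) := by
  unfold nrm ip; fun_prop

end Euclidean

section Polar

variable {V : Type*} [NormedAddCommGroup V] [NormedSpace ℝ V]

/-- The Euclidean unit sphere. It lives in `EuclideanSpace`, since `Fin m → ℝ` carries the sup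
norm; points are brought back to `Fin m → ℝ` by `WithLp.ofLp`. -/
abbrev UnitSphere (m : ℕ) : Type := Metric.sphere (0 : EuclideanSpace ℝ (Fin m)) 1

/-- The surface measure of the Euclidean unit sphere. -/
def sphereMeasure (m : ℕ) : Measure (UnitSphere m) :=
  (volume : Measure (EuclideanSpace ℝ (Fin m))).toSphere

instance : IsFiniteMeasure (sphereMeasure m) := by unfold sphereMeasure; infer_instance

/-- The integral over the unit sphere of a function on `ℝ^m`. -/
def sphereIntegral (h : (Fin m → ℝ) → V) : V :=
  ∫ ξ : UnitSphere m, h (WithLp.ofLp ξ.1) ∂(sphereMeasure m)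

lemma nrm_ofLp_sphere (ξ : UnitSphere m) : nrm (WithLp.ofLp ξ.1) = 1 := by
  rw [nrm_eq_norm_toLp]; simp

lemma integral_eq_integral_ofLp (F : (Fin m → ℝ) → V) :
    ∫ x, F x = ∫ v : EuclideanSpace ℝ (Fin m), F (WithLp.ofLp v) := by
  rw [← (PiLp.volume_preserving_toLp (Fin m)).integral_comp
    (MeasurableEquiv.toLp 2 (Fin m → ℝ)).measurableEmbedding]

lemma integral_volumeIoiPow (n : ℕ) (φ : ℝ → ℝ) :
    ∫ r : Set.Ioi (0 : ℝ), φ r ∂(Measure.volumeIoiPow n) = ∫ r in Set.Ioi (0 : ℝ), r ^ n * φ r := by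
  simp only [Measure.volumeIoiPow, ENNReal.ofReal]
  rw [integral_withDensity_eq_integral_smul,
    integral_subtype_comap measurableSet_Ioi fun a => Real.toNNReal (a ^ n) • φ a,
    setIntegral_congr_fun measurableSet_Ioi fun r hr => ?_]
  · rw [NNReal.smul_def, Real.coe_toNNReal _ (pow_nonneg hr.out.le _), smul_eq_mul]
  · exact (measurable_subtype_coe.pow_const _).real_toNNReal

lemma integral_comp_nrm_smul_comp_normalize [NeZero m] (φ : ℝ → ℝ) (h : (Fin m → ℝ) → V) :
    ∫ x : Fin m → ℝ, φ (nrm x) • h ((nrm x)⁻¹ • x)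
      = (∫ r in Set.Ioi (0 : ℝ), r ^ (m - 1) * φ r) • sphereIntegral h := by
  let E := EuclideanSpace ℝ (Fin m)
  let F : E → V := fun v => φ ‖v‖ • h (WithLp.ofLp (‖v‖⁻¹ • v))
  calc ∫ x : Fin m → ℝ, φ (nrm x) • h ((nrm x)⁻¹ • x) = ∫ v : E, F v := by
        simp only [integral_eq_integral_ofLp, nrm_eq_norm_toLp]
        rfl
    _ = ∫ v : ({0}ᶜ : Set E), F v ∂((volume : Measure E).comap Subtype.val) := by
        rw [integral_subtype_comap (measurableSet_singleton _).compl F,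
          restrict_compl_singleton]
    _ = ∫ p : UnitSphere m × Set.Ioi (0 : ℝ), φ p.2 • h (WithLp.ofLp p.1.1)
          ∂((volume : Measure E).toSphere.prod (.volumeIoiPow (Module.finrank ℝ E - 1))) := by
        rw [← (volume : Measure E).measurePreserving_homeomorphUnitSphereProd.integral_comp
          (Homeomorph.measurableEmbedding _)]
        simp [F]
    _ = (∫ r : Set.Ioi (0 : ℝ), φ r ∂(.volumeIoiPow (Module.finrank ℝ E - 1))) •
          sphereIntegral h := by
        rw [sphereIntegral, sphereMeasure, ← integral_prod_smul, ← integral_prod_swap]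
        rfl
    _ = (∫ r in Set.Ioi (0 : ℝ), r ^ (m - 1) * φ r) • sphereIntegral h := by
        rw [integral_volumeIoiPow, finrank_euclideanSpace_fin]

lemma integral_comp_nrm_smul_of_homogeneous [NeZero m] (φ : ℝ → ℝ) {h : (Fin m → ℝ) → V} {d : ℕ}
    (hh : ∀ (c : ℝ) x, h (c • x) = c ^ d • h x) :
    ∫ x : Fin m → ℝ, φ (nrm x) • h x
      = (∫ r in Set.Ioi (0 : ℝ), r ^ (m - 1) * (φ r * r ^ d)) • sphereIntegral h := by
  rw [← integral_comp_nrm_smul_comp_normalize (fun r => φ r * r ^ d) h]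
  refine integral_congr_ae ?_
  filter_upwards [Measure.ae_ne volume 0] with x hx
  rw [hh, smul_smul, inv_pow, mul_assoc, mul_inv_cancel₀ (pow_ne_zero _ (nrm_pos hx).ne'), mul_one]

end Polar

section Gaussian

/-- The Gaussian `exp (-|x|²/2)`. -/
def gaussian (x : Fin m → ℝ) : ℝ := Real.exp (-(nrm x) ^ 2 / 2)

lemma continuous_gaussian : Continuous (gaussian : (Fin m → ℝ) → ℝ) := by
  have := continuous_nrm (m := m)
  unfold gaussian
  fun_prop

lemma gaussian_nonneg (x : Fin m → ℝ) : 0 ≤ gaussian x := (Real.exp_pos _).le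

lemma integral_gaussian : ∫ x : Fin m → ℝ, gaussian x = (2 * Real.pi) ^ ((m : ℝ) / 2) := by
  have h := GaussianFourier.integral_rexp_neg_mul_sq_norm (V := EuclideanSpace ℝ (Fin m))
    (b := 1 / 2) (by norm_num)
  rw [finrank_euclideanSpace_fin] at h
  rw [integral_eq_integral_ofLp, show 2 * Real.pi = Real.pi / (1 / 2) by ring, ← h]
  simp only [gaussian, nrm_eq_norm_toLp]
  congr! 3
  ring

lemma exists_one_add_pow_mul_exp_neg_sq_le (N : ℕ) :
    ∃ K : ℝ, 0 ≤ K ∧ ∀ t : ℝ, 0 ≤ t → (1 + t) ^ N * Real.exp (-t ^ 2 / 2) ≤ K := by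
  refine ⟨N.factorial * Real.exp (3 / 2), by positivity, fun t ht => ?_⟩
  have hpow := Real.pow_div_factorial_le_exp (1 + t) (by linarith) N
  rw [div_le_iff₀ (by positivity)] at hpow
  have hexp : Real.exp (-t ^ 2 / 2) ≤ Real.exp (3 / 2) * Real.exp (-(1 + t)) := by
    rw [← Real.exp_add]
    exact Real.exp_le_exp.mpr (by nlinarith [sq_nonneg (t - 1)])
  calc (1 + t) ^ N * Real.exp (-t ^ 2 / 2)
      ≤ (Real.exp (1 + t) * N.factorial) * (Real.exp (3 / 2) * Real.exp (-(1 + t))) := by gcongr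
    _ = N.factorial * Real.exp (3 / 2) * (Real.exp (1 + t) * Real.exp (-(1 + t))) := by ring
    _ = N.factorial * Real.exp (3 / 2) := by rw [← Real.exp_add]; simp

lemma gaussian_le (x : Fin m → ℝ) : gaussian x ≤ Real.exp (-‖x‖ ^ 2 / 2) := by
  have := norm_le_nrm x
  unfold gaussian
  gcongr

lemma integrable_one_add_norm_pow_mul_exp_neg_sq (d : ℕ) :
    Integrable fun x : Fin m → ℝ => (1 + ‖x‖) ^ d * Real.exp (-‖x‖ ^ 2 / 2) := by
  obtain ⟨K, -, hK⟩ := exists_one_add_pow_mul_exp_neg_sq_le (d + (m + 1))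
  have hdecay : Integrable fun x : Fin m → ℝ => (1 + ‖x‖) ^ (-((m : ℝ) + 1)) :=
    integrable_one_add_norm (by simp)
  refine (hdecay.const_mul K).mono' (by fun_prop) (ae_of_all _ fun x => ?_)
  have hx : 0 < 1 + ‖x‖ := by positivity
  have hrpow : (1 + ‖x‖) ^ (-((m : ℝ) + 1)) = ((1 + ‖x‖) ^ (m + 1))⁻¹ := by
    rw [Real.rpow_neg hx.le]; norm_cast
  rw [Real.norm_of_nonneg (by positivity), hrpow, le_mul_inv_iff₀ (by positivity)]
  refine le_of_eq_of_le ?_ (hK ‖x‖ (norm_nonneg x))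
  ring

lemma integrable_gaussian_smul {V : Type*} [NormedAddCommGroup V] [NormedSpace ℝ V]
    {g : (Fin m → ℝ) → V} (hg : Continuous g) {d : ℕ} {K : ℝ}
    (hK : ∀ x, ‖g x‖ ≤ K * (1 + ‖x‖) ^ d) : Integrable fun x => gaussian x • g x := by
  refine ((integrable_one_add_norm_pow_mul_exp_neg_sq d).const_mul K).mono'
    (continuous_gaussian.smul hg).aestronglyMeasurable (ae_of_all _ fun x => ?_)
  rw [norm_smul, Real.norm_of_nonneg (gaussian_nonneg x)]
  calc gaussian x * ‖g x‖ ≤ Real.exp (-‖x‖ ^ 2 / 2) * (K * (1 + ‖x‖) ^ d) :=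
        mul_le_mul (gaussian_le x) (hK x) (norm_nonneg _) (Real.exp_pos _).le
    _ = K * ((1 + ‖x‖) ^ d * Real.exp (-‖x‖ ^ 2 / 2)) := by ring

lemma integral_pow_mul_exp_neg_sq [NeZero m] (d : ℕ) :
    ∫ r in Set.Ioi (0 : ℝ), r ^ (m - 1) * (Real.exp (-r ^ 2 / 2) * r ^ d)
      = 2 ^ (((m : ℝ) + d) / 2 - 1) * Real.Gamma (((m : ℝ) + d) / 2) := by
  have hm : 1 ≤ m := NeZero.one_le
  have hgamma := integral_rpow_mul_exp_neg_mul_rpow (p := 2) (q := ((m : ℝ) + d - 1)) (b := 1 / 2)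
    (by norm_num) (by have : (1 : ℝ) ≤ m := by exact_mod_cast hm
                      have : (0 : ℝ) ≤ d := by positivity
                      linarith) (by norm_num)
  have hrpow : ∫ r in Set.Ioi (0 : ℝ), r ^ (m - 1) * (Real.exp (-r ^ 2 / 2) * r ^ d)
      = ∫ r in Set.Ioi (0 : ℝ), r ^ ((m : ℝ) + d - 1) * Real.exp (-(1 / 2) * r ^ (2 : ℝ)) := by
    refine setIntegral_congr_fun measurableSet_Ioi fun r _ => ?_
    have hpow : r ^ ((m : ℝ) + d - 1) = r ^ (m - 1) * r ^ d := by
      rw [← pow_add, ← Real.rpow_natCast]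
      congr 1
      push_cast [Nat.cast_sub hm]
      ring
    simp only [hpow, Real.rpow_two]
    ring_nf
  rw [hrpow, hgamma, show (m : ℝ) + d - 1 + 1 = m + d by ring, Real.rpow_sub (by norm_num),
    Real.rpow_one, one_div, Real.inv_rpow (by norm_num), ← Real.rpow_neg (by norm_num), neg_div,
    neg_neg]
  ring

end Gaussian

/-! ### Smooth homogeneous functions and solid harmonics -/

section Homogeneous

open scoped ContDiff

variable {V : Type*} [NormedAddCommGroup V] [NormedSpace ℝ V] {d : ℕ} {g : (Fin m → ℝ) → V}

/-- The derivative of `g` in the direction `v`, as a function of the point. -/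
def dirDeriv (v : Fin m → ℝ) (g : (Fin m → ℝ) → V) : (Fin m → ℝ) → V := fun x => fderiv ℝ g x v

/-- Smooth functions on `ℝ^m`, homogeneous of degree `d` for all real (also negative) factors. -/
structure IsSmoothHomogeneous (d : ℕ) (g : (Fin m → ℝ) → V) : Prop where
  contDiff : ContDiff ℝ ∞ g
  map_smul : ∀ (c : ℝ) x, g (c • x) = c ^ d • g x

/-- Solid harmonics of degree `d`: smooth homogeneous solutions of Laplace's equation. -/
structure IsSolidHarmonic (d : ℕ) (g : (Fin m → ℝ) → V) : Prop
    extends IsSmoothHomogeneous d g where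
  laplacian_eq_zero :
    ∀ x, ∑ i : Fin m, dirDeriv (Pi.single i 1) (dirDeriv (Pi.single i 1) g) x = 0

lemma contDiff_dirDeriv (hg : ContDiff ℝ ∞ g) (v : Fin m → ℝ) : ContDiff ℝ ∞ (dirDeriv v g) :=
  (hg.fderiv_right (m := ∞) (by simp)).clm_apply contDiff_const

lemma dirDeriv_const (c : V) (v : Fin m → ℝ) : dirDeriv v (fun _ => c) = fun _ => 0 := by
  funext x; simp [dirDeriv]

lemma dirDeriv_eq_sum (v x : Fin m → ℝ) :
    dirDeriv v g x = ∑ i, v i • dirDeriv (Pi.single i 1) g x := by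
  simp_rw [dirDeriv, ← map_smul, ← map_sum]
  congr 1
  simpa using pi_eq_sum_univ' v

lemma dirDeriv_finsetSum {ι : Type*} {s : Finset ι} {G : ι → (Fin m → ℝ) → V}
    (hG : ∀ i ∈ s, Differentiable ℝ (G i)) (v x : Fin m → ℝ) :
    dirDeriv v (fun x => ∑ i ∈ s, G i x) x = ∑ i ∈ s, dirDeriv v (G i) x := by
  rw [dirDeriv, fderiv_fun_sum fun i hi => hG i hi x]
  simp [dirDeriv]

lemma dirDeriv_comm (hg : ContDiff ℝ ∞ g) (v w : Fin m → ℝ) :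
    dirDeriv v (dirDeriv w g) = dirDeriv w (dirDeriv v g) := by
  have hsecond (v w x : Fin m → ℝ) : dirDeriv v (dirDeriv w g) x = fderiv ℝ (fderiv ℝ g) x v w := by
    have hd : DifferentiableAt ℝ (fderiv ℝ g) x :=
      (hg.fderiv_right (m := ∞) (by simp)).differentiable (by simp) x
    have hfderiv := (hd.hasFDerivAt.clm_apply (hasFDerivAt_const w x)).fderiv
    unfold dirDeriv
    rw [hfderiv]
    simp
  funext x
  rw [hsecond, hsecond]
  have hx : ContDiffAt ℝ 2 g x := (hg.of_le (by norm_cast)).contDiffAt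
  exact (hx.isSymmSndFDerivAt (by simp)) v w

namespace IsSmoothHomogeneous

lemma differentiable (hg : IsSmoothHomogeneous d g) : Differentiable ℝ g :=
  hg.contDiff.differentiable (by simp)

lemma eq_const (hg : IsSmoothHomogeneous 0 g) : g = fun _ => g 0 := by
  funext x
  simpa using (hg.map_smul 0 x).symm

lemma dirDeriv_smul_of_ne_zero (hg : IsSmoothHomogeneous (d + 1) g) (v x : Fin m → ℝ) {c : ℝ}
    (hc : c ≠ 0) : dirDeriv v g (c • x) = c ^ d • dirDeriv v g x := by
  have hscale : fderiv ℝ (fun x => g (c • x)) x = c ^ (d + 1) • fderiv ℝ g x := by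
    rw [funext (hg.map_smul c)]
    exact fderiv_fun_const_smul (hg.differentiable x) _
  rw [fderiv_comp_smul, pow_succ', mul_smul] at hscale
  exact congrArg (fun T => T v) (smul_right_injective _ hc hscale)

protected lemma dirDeriv (hg : IsSmoothHomogeneous d g) (v : Fin m → ℝ) :
    IsSmoothHomogeneous (d - 1) (dirDeriv v g) := by
  refine ⟨contDiff_dirDeriv hg.contDiff v, fun c x => ?_⟩
  cases d with
  | zero => rw [hg.eq_const, dirDeriv_const, smul_zero]
  | succ d =>
    have heq : Set.EqOn (fun c : ℝ => dirDeriv v g (c • x))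
        (fun c => c ^ d • dirDeriv v g x) {0}ᶜ :=
      fun c hc => hg.dirDeriv_smul_of_ne_zero v x hc
    have hcont : Continuous fun c : ℝ => dirDeriv v g (c • x) :=
      (contDiff_dirDeriv hg.contDiff v).continuous.comp (by fun_prop)
    exact congrFun (hcont.ext_on (dense_compl_singleton 0) (by fun_prop) heq) c

lemma dirDeriv_self (hg : IsSmoothHomogeneous d g) (x : Fin m → ℝ) :
    dirDeriv x g x = (d : ℝ) • g x := by
  have hline : HasDerivAt (fun c : ℝ => c • x) x 1 := by
    simpa using (hasDerivAt_id (1 : ℝ)).smul_const x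
  have hchain : HasDerivAt (fun c : ℝ => g (c • x)) (fderiv ℝ g x x) 1 := by
    simpa [Function.comp_def] using
      (hg.differentiable ((1 : ℝ) • x)).hasFDerivAt.comp_hasDerivAt (1 : ℝ) hline
  have hpow : HasDerivAt (fun c : ℝ => g (c • x)) ((d : ℝ) • g x) 1 := by
    simp only [hg.map_smul]
    simpa using (hasDerivAt_pow d (1 : ℝ)).smul_const (g x)
  exact hchain.unique hpow

lemma exists_norm_le (hg : IsSmoothHomogeneous d g) :
    ∃ K : ℝ, ∀ x, ‖g x‖ ≤ K * (1 + ‖x‖) ^ d := by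
  obtain ⟨K, hK⟩ := (isCompact_closedBall (0 : Fin m → ℝ) 1).exists_bound_of_continuousOn
    hg.contDiff.continuous.continuousOn
  refine ⟨K, fun x => ?_⟩
  have hpos : 0 < 1 + ‖x‖ := by positivity
  have hball : (1 + ‖x‖)⁻¹ • x ∈ Metric.closedBall 0 1 := by
    rw [mem_closedBall_zero_iff, norm_smul, norm_inv, Real.norm_of_nonneg hpos.le,
      inv_mul_le_iff₀ hpos]
    linarith
  calc ‖g x‖ = ‖g ((1 + ‖x‖) • (1 + ‖x‖)⁻¹ • x)‖ := by rw [smul_inv_smul₀ hpos.ne']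
    _ = ‖g ((1 + ‖x‖)⁻¹ • x)‖ * (1 + ‖x‖) ^ d := by
        rw [hg.map_smul, norm_smul, Real.norm_of_nonneg (by positivity), mul_comm]
    _ ≤ K * (1 + ‖x‖) ^ d := by gcongr; exact hK _ hball

lemma integrable_gaussian_smul (hg : IsSmoothHomogeneous d g) :
    Integrable fun x => gaussian x • g x := by
  obtain ⟨K, hK⟩ := hg.exists_norm_le
  exact CliffordFourier.integrable_gaussian_smul hg.contDiff.continuous hK

lemma ip_pow_smul (hg : IsSmoothHomogeneous d g) (v : Fin m → ℝ) (n : ℕ) :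
    IsSmoothHomogeneous (d + n) fun x => ip x v ^ n • g x := by
  refine ⟨ContDiff.smul (by unfold ip; fun_prop) hg.contDiff, fun c x => ?_⟩
  rw [hg.map_smul, ip_smul_left, smul_smul, smul_smul]
  ring_nf

end IsSmoothHomogeneous

lemma IsSolidHarmonic.dirDeriv (hg : IsSolidHarmonic d g) (v : Fin m → ℝ) :
    IsSolidHarmonic (d - 1) (dirDeriv v g) := by
  refine ⟨hg.toIsSmoothHomogeneous.dirDeriv v, fun x => ?_⟩
  have hcomm (i : Fin m) : CliffordFourier.dirDeriv (Pi.single i 1)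
      (CliffordFourier.dirDeriv (Pi.single i 1) (CliffordFourier.dirDeriv v g))
      = CliffordFourier.dirDeriv v (CliffordFourier.dirDeriv (Pi.single i 1)
        (CliffordFourier.dirDeriv (Pi.single i 1) g)) := by
    rw [dirDeriv_comm hg.contDiff _ v, dirDeriv_comm (contDiff_dirDeriv hg.contDiff _) _ v]
  simp_rw [hcomm]
  rw [← dirDeriv_finsetSum fun i _ => (contDiff_dirDeriv (contDiff_dirDeriv hg.contDiff _) _)
    |>.differentiable (by simp), funext hg.laplacian_eq_zero, dirDeriv_const]

/-- The linear form `x ↦ ⟨x, v⟩`. -/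
def ipCLM (v : Fin m → ℝ) : (Fin m → ℝ) →L[ℝ] ℝ :=
  ∑ i, v i • ContinuousLinearMap.proj i

lemma ipCLM_apply (v x : Fin m → ℝ) : ipCLM v x = ip x v := by
  simp [ipCLM, ip, mul_comm]

lemma hasFDerivAt_gaussian (x : Fin m → ℝ) :
    HasFDerivAt gaussian (-gaussian x • ipCLM x) x := by
  have hcoord (i : Fin m) : HasFDerivAt (fun x : Fin m → ℝ => x i * x i)
      ((2 * x i) • (ContinuousLinearMap.proj i : (Fin m → ℝ) →L[ℝ] ℝ)) x := by
    have h := (ContinuousLinearMap.proj (R := ℝ) (φ := fun _ : Fin m => ℝ) i).hasFDerivAt (x := x)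
    refine (h.mul h).congr_fderiv ?_
    ext v; simp; ring
  have hexp := ((HasFDerivAt.fun_sum (u := Finset.univ) fun i _ => hcoord i).const_mul (-1 / 2)).exp
  have hgauss : (gaussian : (Fin m → ℝ) → ℝ) = fun x => Real.exp (-1 / 2 * ∑ i, x i * x i) := by
    funext y; rw [gaussian, nrm_sq, ip]; ring_nf
  rw [hgauss]
  refine hexp.congr_fderiv ?_
  simp only [ipCLM, Finset.smul_sum, smul_smul]
  refine Finset.sum_congr rfl fun i _ => ?_
  ring_nf

lemma IsSmoothHomogeneous.integral_gaussian_smul_ip_smul (hg : IsSmoothHomogeneous d g)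
    (v : Fin m → ℝ) :
    ∫ x, gaussian x • (ip x v • g x) = ∫ x, gaussian x • CliffordFourier.dirDeriv v g x := by
  have hderiv (x : Fin m → ℝ) :
      fderiv ℝ gaussian x v • g x = -(gaussian x • (ip x v • g x)) := by
    rw [(hasFDerivAt_gaussian x).fderiv]
    simp [smul_smul, ipCLM_apply, ip_comm v x]
  have hint : Integrable fun x => fderiv ℝ gaussian x v • g x := by
    simp_rw [hderiv]
    simpa using (hg.ip_pow_smul v 1).integrable_gaussian_smul.neg
  have hparts := integral_smul_fderiv_eq_neg_fderiv_smul_of_integrable hint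
    (hg.dirDeriv v).integrable_gaussian_smul hg.integrable_gaussian_smul
    (fun x _ => (hasFDerivAt_gaussian x).differentiableAt) (fun x _ => hg.differentiable x)
  simp_rw [hderiv, integral_neg, neg_neg] at hparts
  exact hparts.symm

end Homogeneous

/-! ### The Funk–Hecke formula for Gegenbauer polynomials -/

section FunkHecke

open Polynomial

/-- `evenGap l k` is `1` if `k - l` is an even natural number, and `0` otherwise. -/
def evenGap (l k : ℕ) : ℝ := if l ≤ k ∧ Even (k - l) then 1 else 0

lemma evenGap_add_two_mul (l j : ℕ) : evenGap l (l + 2 * j) = 1 := by simp [evenGap]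

lemma evenGap_eq_zero {l k : ℕ} (h : ∀ j, k ≠ l + 2 * j) : evenGap l k = 0 :=
  if_neg fun ⟨_, j, hj⟩ => h j (by lia)

lemma evenGap_succ_succ (l k : ℕ) : evenGap (l + 1) (k + 1) = evenGap l k := by simp [evenGap]

lemma evenGap_add_two (l k : ℕ) :
    evenGap l (k + 2) = evenGap l k + if k + 2 = l then 1 else 0 := by
  by_cases h : ∃ j, k = l + 2 * j
  · obtain ⟨j, rfl⟩ := h
    rw [if_neg (by lia), evenGap_add_two_mul, show l + 2 * j + 2 = l + 2 * (j + 1) by ring,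
      evenGap_add_two_mul, add_zero]
  · push Not at h
    rw [evenGap_eq_zero h, zero_add]
    split_ifs with hl
    · simpa [hl] using evenGap_add_two_mul l 0
    · exact evenGap_eq_zero fun j hj => h (j - 1) (by lia)

/-- The factor `c` in `∫ gaussian(x) ⟨x,η⟩^n H(x) dx = (2π)^{m/2} c H(η)`, for `H` a solid harmonic
of degree `l` and `η` a unit vector; it is independent of the dimension. -/
def gaussianMoment (n l : ℕ) : ℝ :=
  evenGap l n * (n.factorial / (2 ^ ((n - l) / 2) * ((n - l) / 2).factorial))

lemma gaussianMoment_add_two_mul (l j : ℕ) :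
    gaussianMoment (l + 2 * j) l = (l + 2 * j).factorial / (2 ^ j * j.factorial) := by
  simp [gaussianMoment, evenGap_add_two_mul]

lemma gaussianMoment_eq_zero {n l : ℕ} (h : ∀ j, n ≠ l + 2 * j) : gaussianMoment n l = 0 := by
  rw [gaussianMoment, evenGap_eq_zero h, zero_mul]

lemma natCast_mul_gaussianMoment_sub_one (n j l : ℕ) (hn : n + 1 = l + 2 * j) :
    n * gaussianMoment (n - 1) l = 2 * j * (n.factorial / (2 ^ j * j.factorial)) := by
  rcases j with _ | j
  · rcases n with _ | n
    · simp
    · simp [gaussianMoment_eq_zero (n := n) (l := l) (by lia)]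
  · obtain ⟨n, rfl⟩ : ∃ i, n = i + 1 := ⟨n - 1, by lia⟩
    obtain rfl : n = l + 2 * j := by lia
    rw [Nat.add_sub_cancel, gaussianMoment_add_two_mul, Nat.factorial_succ, Nat.factorial_succ]
    push_cast
    field_simp
    ring

lemma natCast_mul_gaussianMoment_pred (n j l : ℕ) (hn : n + 1 = l + 2 * j) :
    l * gaussianMoment n (l - 1) = l * (n.factorial / (2 ^ j * j.factorial)) := by
  rcases l with _ | l
  · simp
  · obtain rfl : n = l + 2 * j := by lia
    rw [Nat.add_sub_cancel, gaussianMoment_add_two_mul]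

lemma gaussianMoment_succ (n l : ℕ) :
    gaussianMoment (n + 1) l = n * gaussianMoment (n - 1) l + l * gaussianMoment n (l - 1) := by
  by_cases h : ∃ j, n + 1 = l + 2 * j
  · obtain ⟨j, hj⟩ := h
    have hn : (n : ℝ) + 1 = l + 2 * j := by exact_mod_cast hj
    rw [natCast_mul_gaussianMoment_sub_one n j l hj, natCast_mul_gaussianMoment_pred n j l hj, hj,
      gaussianMoment_add_two_mul, ← hj, Nat.factorial_succ]
    push_cast
    rw [hn]
    ring
  · push Not at h
    have hl : l * gaussianMoment n (l - 1) = 0 := by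
      rcases l with _ | l
      · simp
      · rw [gaussianMoment_eq_zero fun j hj => h j (by lia), mul_zero]
    have hn : n * gaussianMoment (n - 1) l = 0 := by
      rcases n with _ | n
      · simp
      · rw [gaussianMoment_eq_zero fun j hj => h (j + 1) (by lia), mul_zero]
    rw [gaussianMoment_eq_zero h, hl, hn, add_zero]

variable {V : Type*} [NormedAddCommGroup V] [NormedSpace ℝ V] {l : ℕ} {H : (Fin m → ℝ) → V}
  {η : Fin m → ℝ}

-- By Euler's identity and Gaussian integration by parts, `l ∫ γ H = ∫ γ ΔH`.
lemma IsSolidHarmonic.integral_gaussian_smul_eq_zero (hH : IsSolidHarmonic l H) (hl : l ≠ 0) :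
    ∫ x, gaussian x • H x = 0 := by
  have heuler (x : Fin m → ℝ) : (l : ℝ) • gaussian x • H x = ∑ i, gaussian x •
      (ip x (Pi.single i 1) • CliffordFourier.dirDeriv (Pi.single i 1) H x) := by
    rw [smul_comm, ← hH.dirDeriv_self, dirDeriv_eq_sum, Finset.smul_sum]
    simp [ip, Pi.single_apply]
  have hpartial (i : Fin m) := hH.toIsSmoothHomogeneous.dirDeriv (Pi.single i 1)
  have hzero : (l : ℝ) • ∫ x, gaussian x • H x = 0 := by
    rw [← integral_smul]
    simp_rw [heuler]
    rw [integral_finsetSum _ fun i _ => by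
      simpa using ((hpartial i).ip_pow_smul (Pi.single i 1) 1).integrable_gaussian_smul]
    simp_rw [(hpartial _).integral_gaussian_smul_ip_smul]
    rw [← integral_finsetSum _ fun i _ => ((hpartial i).dirDeriv _).integrable_gaussian_smul]
    simp_rw [← Finset.smul_sum]
    simp [hH.laplacian_eq_zero]
  exact (smul_eq_zero.mp hzero).resolve_left (Nat.cast_ne_zero.mpr hl)

lemma dirDeriv_ip_pow_smul (hH : Differentiable ℝ H) (hη : ip η η = 1) (n : ℕ) (x : Fin m → ℝ) :
    dirDeriv η (fun x => ip x η ^ n • H x) x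
      = (n : ℝ) • (ip x η ^ (n - 1) • H x) + ip x η ^ n • dirDeriv η H x := by
  have hip : HasFDerivAt (fun x => ip x η) (ipCLM η) x := by
    rw [← funext (ipCLM_apply η)]
    exact (ipCLM η).hasFDerivAt
  rw [dirDeriv, ((hip.pow n).fun_smul (hH x).hasFDerivAt).fderiv]
  simp [dirDeriv, ipCLM_apply, hη, smul_smul, add_comm]

lemma IsSolidHarmonic.integral_gaussian_smul_ip_pow_smul [CompleteSpace V]
    (hη : ip η η = 1) (n : ℕ) : ∀ {l : ℕ} {H : (Fin m → ℝ) → V}, IsSolidHarmonic l H →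
      ∫ x, gaussian x • (ip x η ^ n • H x)
        = ((2 * Real.pi) ^ ((m : ℝ) / 2) * gaussianMoment n l) • H η := by
  induction n using Nat.strong_induction_on with
  | _ n ih =>
  intro l H hH
  rcases n with _ | n
  · rcases eq_or_ne l 0 with rfl | hl
    · have hconst := hH.eq_const
      have hone : gaussianMoment 0 0 = 1 := by simpa using gaussianMoment_add_two_mul 0 0
      rw [hconst]
      simp [integral_smul_const, integral_gaussian, hone]
    · rw [gaussianMoment_eq_zero (by lia), mul_zero, zero_smul]
      simpa using hH.integral_gaussian_smul_eq_zero hl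
  · have hparts := (hH.ip_pow_smul η n).integral_gaussian_smul_ip_smul η
    simp_rw [dirDeriv_ip_pow_smul hH.differentiable hη, smul_add, smul_smul (ip _ η), ← pow_succ',
      smul_comm (gaussian _) (n : ℝ)] at hparts
    rw [hparts, integral_add ((hH.ip_pow_smul η (n - 1)).integrable_gaussian_smul.fun_smul _)
      ((hH.toIsSmoothHomogeneous.dirDeriv η).ip_pow_smul η n).integrable_gaussian_smul,
      integral_smul, ih n (by lia) (hH.dirDeriv η), ih (n - 1) (by lia) hH, hH.dirDeriv_self,
      smul_smul, smul_smul, ← add_smul, gaussianMoment_succ]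
    congr 1
    ring

/-- The factor `c` in `∫_S ⟨ξ,η⟩^n H(ξ) dσ(ξ) = c H(η)`, for `H` a solid harmonic of degree `l` on
`ℝ^{2λ+2}` and `η` a unit vector. -/
def sphereMoment (lam : ℝ) (n l : ℕ) : ℝ :=
  2 * Real.pi ^ (lam + 1) * gaussianMoment n l
    / (2 ^ ((n + l) / 2) * Real.Gamma (((n + l) / 2 : ℕ) + lam + 1))

lemma sphereMoment_add_two_mul (lam : ℝ) (l j : ℕ) :
    sphereMoment lam (l + 2 * j) l = 2 * Real.pi ^ (lam + 1) * (l + 2 * j).factorial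
      / (2 ^ (l + 2 * j) * j.factorial * Real.Gamma (l + j + lam + 1)) := by
  rw [sphereMoment, gaussianMoment_add_two_mul, show (l + 2 * j + l) / 2 = l + j by lia,
    show l + 2 * j = (l + j) + j by ring, pow_add 2 (l + j) j]
  push_cast
  field_simp

lemma sphereMoment_eq_zero (lam : ℝ) {n l : ℕ} (h : ∀ j, n ≠ l + 2 * j) :
    sphereMoment lam n l = 0 := by
  simp [sphereMoment, gaussianMoment_eq_zero h]

lemma gaussianMoment_div_eq_sphereMoment [NeZero m] (n l : ℕ) :
    (2 * Real.pi) ^ ((m : ℝ) / 2) * gaussianMoment n l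
        / ((2 : ℝ) ^ (((m : ℝ) + (l + n : ℕ)) / 2 - 1) * Real.Gamma (((m : ℝ) + (l + n : ℕ)) / 2))
      = sphereMoment (((m : ℝ) - 2) / 2) n l := by
  by_cases h : ∃ j, n = l + 2 * j
  · obtain ⟨j, rfl⟩ := h
    have hm : (0 : ℝ) < m := Nat.cast_pos.mpr (NeZero.pos m)
    have hhalf : ((m : ℝ) + (l + (l + 2 * j) : ℕ)) / 2 = (m : ℝ) / 2 + (l + j : ℕ) := by
      push_cast; ring
    rw [hhalf, sphereMoment, show (l + 2 * j + l) / 2 = l + j by lia, Real.rpow_sub_one two_ne_zero,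
      Real.rpow_add two_pos, Real.rpow_natCast, Real.mul_rpow two_pos.le Real.pi_pos.le,
      show ((l + j : ℕ) : ℝ) + ((m : ℝ) - 2) / 2 + 1 = (m : ℝ) / 2 + (l + j : ℕ) by ring,
      show ((m : ℝ) - 2) / 2 + 1 = (m : ℝ) / 2 by ring]
    field_simp
  · push Not at h
    rw [sphereMoment_eq_zero _ h, gaussianMoment_eq_zero h, mul_zero, zero_div]

lemma IsSolidHarmonic.sphereIntegral_ip_pow_smul [CompleteSpace V] [NeZero m]
    (hH : IsSolidHarmonic l H) (hη : ip η η = 1) (n : ℕ) :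
    sphereIntegral (fun x => ip x η ^ n • H x)
      = sphereMoment (((m : ℝ) - 2) / 2) n l • H η := by
  have hm : (0 : ℝ) < m := Nat.cast_pos.mpr (NeZero.pos m)
  have hradial := integral_comp_nrm_smul_of_homogeneous (fun r => Real.exp (-r ^ 2 / 2))
    (h := fun x => ip x η ^ n • H x) (hH.ip_pow_smul η n).map_smul
  rw [integral_pow_mul_exp_neg_sq] at hradial
  have hne : (2 : ℝ) ^ (((m : ℝ) + (l + n : ℕ)) / 2 - 1) * Real.Gamma (((m : ℝ) + (l + n : ℕ)) / 2)
      ≠ 0 := mul_ne_zero (by positivity) (Real.Gamma_pos_of_pos (by positivity)).ne'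
  rw [← gaussianMoment_div_eq_sphereMoment, div_eq_inv_mul, mul_smul,
    ← hH.integral_gaussian_smul_ip_pow_smul hη n]
  exact (eq_inv_smul_iff₀ hne).mpr hradial.symm

lemma sphereMoment_succ_zero (lam : ℝ) (n : ℕ) :
    sphereMoment lam (n + 1) 0 = sphereMoment lam n 1 := by
  by_cases h : ∃ i, n = 1 + 2 * i
  · obtain ⟨i, rfl⟩ := h
    have hshift : ((0 : ℕ) : ℝ) + (i + 1 : ℕ) + lam + 1 = (1 : ℕ) + i + lam + 1 := by
      push_cast; ring
    rw [show 1 + 2 * i + 1 = 0 + 2 * (i + 1) by ring, sphereMoment_add_two_mul,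
      sphereMoment_add_two_mul, hshift, show 0 + 2 * (i + 1) = (1 + 2 * i) + 1 by ring,
      Nat.factorial_succ (1 + 2 * i), Nat.factorial_succ i, pow_succ]
    push_cast
    field_simp
    ring
  · push Not at h
    rw [sphereMoment_eq_zero _ h, sphereMoment_eq_zero _ fun j hj => h (j - 1) (by lia)]

lemma sphereMoment_succ_succ {lam : ℝ} (hlam : 0 ≤ lam) (n l : ℕ) :
    2 * (l + 1 + lam) * sphereMoment lam (n + 1) (l + 1)
      = (l + 1 + 2 * lam) * sphereMoment lam n (l + 2) + (l + 1) * sphereMoment lam n l := by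
  by_cases h : ∃ j, n = l + 2 * j
  · obtain ⟨j, rfl⟩ := h
    have hpos : 0 < (l : ℝ) + j + lam + 1 := by positivity
    have hGamma := Real.Gamma_pos_of_pos hpos
    rw [show l + 2 * j + 1 = (l + 1) + 2 * j by ring, sphereMoment_add_two_mul,
      sphereMoment_add_two_mul, show l + 1 + 2 * j = (l + 2 * j) + 1 by ring,
      Nat.factorial_succ (l + 2 * j), pow_succ]
    push_cast
    rw [show (l : ℝ) + 1 + j + lam + 1 = ((l : ℝ) + j + lam + 1) + 1 by ring,
      Real.Gamma_add_one hpos.ne']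
    rcases j with _ | i
    · rw [sphereMoment_eq_zero _ (by lia)]
      norm_num at hpos hGamma ⊢
      field_simp
      ring
    · rw [show l + 2 * (i + 1) = (l + 2) + 2 * i by ring, sphereMoment_add_two_mul,
        Nat.factorial_succ i]
      push_cast at hpos hGamma ⊢
      rw [show (l : ℝ) + 2 + i + lam + 1 = ((l : ℝ) + (i + 1) + lam + 1) + 1 by ring,
        Real.Gamma_add_one hpos.ne']
      field_simp
      ring
  · push Not at h
    rw [sphereMoment_eq_zero _ h, sphereMoment_eq_zero _ fun j hj => h j (by lia),
      sphereMoment_eq_zero _ fun j hj => h (j + 1) (by lia)]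
    simp

/-- The functional `p ↦ c` determined by `∫_S p(⟨ξ,η⟩) H(ξ) dσ(ξ) = c H(η)`, for `H` a solid
harmonic of degree `l` on `ℝ^{2λ+2}` and `η` a unit vector. -/
def funkHecke (lam : ℝ) (l : ℕ) : ℝ[X] →ₗ[ℝ] ℝ :=
  Polynomial.lsum fun n => sphereMoment lam n l • LinearMap.id

lemma funkHecke_monomial (lam : ℝ) (l n : ℕ) (a : ℝ) :
    funkHecke lam l (monomial n a) = sphereMoment lam n l * a := by
  simp [funkHecke, Polynomial.lsum_apply]

lemma funkHecke_zero_X_mul (lam : ℝ) (p : ℝ[X]) : funkHecke lam 0 (X * p) = funkHecke lam 1 p := by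
  induction p using Polynomial.induction_on' with
  | add p q hp hq => rw [mul_add, map_add, map_add, hp, hq]
  | monomial n a =>
    rw [X_mul_monomial, funkHecke_monomial, funkHecke_monomial, sphereMoment_succ_zero]

lemma funkHecke_succ_X_mul {lam : ℝ} (hlam : 0 ≤ lam) (l : ℕ) (p : ℝ[X]) :
    2 * (l + 1 + lam) * funkHecke lam (l + 1) (X * p)
      = (l + 1 + 2 * lam) * funkHecke lam (l + 2) p + (l + 1) * funkHecke lam l p := by
  induction p using Polynomial.induction_on' with
  | add p q hp hq => rw [mul_add X, map_add, map_add, map_add]; linear_combination hp + hq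
  | monomial n a =>
    rw [X_mul_monomial, funkHecke_monomial, funkHecke_monomial, funkHecke_monomial]
    linear_combination a * sphereMoment_succ_succ hlam n l

/-- The Gegenbauer polynomial `C_k^μ` as a formal polynomial. -/
def gegPoly (mu : ℝ) : ℕ → ℝ[X]
  | 0 => 1
  | 1 => (2 * mu) • X
  | (k + 2) => (2 * (k + 1 + mu) / (k + 2)) • (X * gegPoly mu (k + 1))
      - ((k + 2 * mu) / (k + 2)) • gegPoly mu k

lemma eval_gegPoly (mu w : ℝ) (k : ℕ) : (gegPoly mu k).eval w = geg mu k w := by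
  induction k using Nat.twoStepInduction with
  | zero => simp [gegPoly, geg]
  | one => simp [gegPoly, geg]
  | more k ih0 ih1 =>
    simp only [gegPoly, geg, eval_sub, eval_smul, eval_mul, eval_X, ih0, ih1, smul_eq_mul]
    field_simp

/-- The surface area of the unit sphere of `ℝ^{2λ+2}`. -/
def sphereArea (lam : ℝ) : ℝ := 2 * Real.pi ^ (lam + 1) / Real.Gamma (lam + 1)

lemma funkHecke_one (lam : ℝ) (l : ℕ) :
    funkHecke lam l 1 = sphereArea lam * evenGap l 0 := by
  rw [← monomial_zero_one, funkHecke_monomial, mul_one]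
  rcases eq_or_ne l 0 with rfl | hl
  · have hmoment := sphereMoment_add_two_mul lam 0 0
    have hgap := evenGap_add_two_mul 0 0
    simp only [mul_zero, add_zero] at hmoment hgap
    simp [hmoment, hgap, sphereArea]
  · rw [sphereMoment_eq_zero _ (by lia), evenGap_eq_zero (by lia), mul_zero]

lemma funkHecke_X {lam : ℝ} (hlam : 0 ≤ lam) (l : ℕ) :
    2 * (lam + 1) * funkHecke lam l X = sphereArea lam * evenGap l 1 := by
  rcases l with _ | _ | l
  · rw [← mul_one X, funkHecke_zero_X_mul, funkHecke_one]
    simp [evenGap]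
  · have h := funkHecke_succ_X_mul hlam 0 1
    rw [funkHecke_one, funkHecke_one, mul_one] at h
    simp [evenGap] at h ⊢
    linear_combination h
  · have h := funkHecke_succ_X_mul hlam (l + 1) 1
    have hne : 2 * (((l + 1 : ℕ) : ℝ) + 1 + lam) ≠ 0 := by positivity
    rw [funkHecke_one, funkHecke_one, evenGap_eq_zero (by lia), evenGap_eq_zero (by lia), mul_one,
      mul_zero, mul_zero, mul_zero, add_zero] at h
    rw [(mul_eq_zero.mp h).resolve_left hne, evenGap_eq_zero (by lia), mul_zero, mul_zero]

lemma funkHecke_gegPoly {lam : ℝ} (hlam : 0 ≤ lam) (k : ℕ) : ∀ l,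
    funkHecke lam l (gegPoly (lam + 1) k) = sphereArea lam * evenGap l k := by
  induction k using Nat.twoStepInduction with
  | zero => exact funkHecke_one lam
  | one =>
    intro l
    rw [gegPoly, map_smul, smul_eq_mul, funkHecke_X hlam]
  | more k ih0 ih1 =>
    intro l
    rw [gegPoly, map_sub, map_smul, map_smul, ih0, smul_eq_mul, smul_eq_mul]
    rcases l with _ | l
    · rw [funkHecke_zero_X_mul, ih1, evenGap_add_two, if_neg (by lia), evenGap_succ_succ]
      field_simp
      ring
    · have hrec := funkHecke_succ_X_mul hlam l (gegPoly (lam + 1) (k + 1))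
      have hpos : 0 < (l : ℝ) + 1 + lam := by positivity
      rw [ih1, ih1, evenGap_succ_succ, ← evenGap_succ_succ l (k + 1), evenGap_add_two,
        mul_comm, ← eq_div_iff (by positivity)] at hrec
      rw [hrec, evenGap_add_two]
      split_ifs with htop
      · have hkl : (k : ℝ) + 2 = l + 1 := by exact_mod_cast htop
        rw [evenGap_eq_zero (by lia), show (k : ℝ) + 1 + (lam + 1) = l + 1 + lam by linarith, hkl]
        field_simp
        ring
      · field_simp
        ring

lemma integrable_sphere {E : Type*} [NormedAddCommGroup E] {h : (Fin m → ℝ) → E}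
    (hh : Continuous h) :
    Integrable (fun ξ : UnitSphere m => h (WithLp.ofLp ξ.1)) (sphereMeasure m) :=
  Continuous.integrable_of_hasCompactSupport (by fun_prop) (HasCompactSupport.of_compactSpace _)

lemma IsSolidHarmonic.sphereIntegral_eval_smul [CompleteSpace V] [NeZero m]
    (hH : IsSolidHarmonic l H) (hη : ip η η = 1) (p : ℝ[X]) :
    sphereIntegral (fun x => p.eval (ip x η) • H x)
      = funkHecke (((m : ℝ) - 2) / 2) l p • H η := by
  have hint (p : ℝ[X]) := integrable_sphere (h := fun x => p.eval (ip x η) • H x)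
    ((p.continuous.comp (continuous_ip_left η)).smul hH.contDiff.continuous)
  induction p using Polynomial.induction_on' with
  | add p q hp hq =>
    rw [map_add, add_smul, ← hp, ← hq, sphereIntegral, sphereIntegral, sphereIntegral,
      ← integral_add (hint p) (hint q)]
    simp [add_smul]
  | monomial n a =>
    rw [funkHecke_monomial, mul_comm, mul_smul, ← hH.sphereIntegral_ip_pow_smul hη,
      sphereIntegral, sphereIntegral, ← integral_smul]
    simp [mul_smul]

lemma IsSolidHarmonic.sphereIntegral_geg_smul [CompleteSpace V] (hm : 2 ≤ m)
    (hH : IsSolidHarmonic l H) (hη : ip η η = 1) (k : ℕ) :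
    sphereIntegral (fun x => geg (((m : ℝ) - 2) / 2 + 1) k (ip x η) • H x)
      = (sphereArea (((m : ℝ) - 2) / 2) * evenGap l k) • H η := by
  have : NeZero m := ⟨by lia⟩
  have hm' : (2 : ℝ) ≤ m := by exact_mod_cast hm
  rw [← funkHecke_gegPoly (by linarith), ← hH.sphereIntegral_eval_smul hη]
  simp_rw [eval_gegPoly]

end FunkHecke

/-! ### Bessel functions and the Hecke–Bochner formula -/

section Bessel

open scoped ContDiff

/-- The `j`-th term of the power series `besselJt a t`. -/
def besselTerm (a t : ℝ) (j : ℕ) : ℝ :=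
  ((-1 : ℝ) ^ j * (t / 2) ^ (2 * j)) / (j.factorial * Real.Gamma ((j : ℝ) + a + 1) * (2 : ℝ) ^ a)

lemma Gamma_le_Gamma_natCast_add {a : ℝ} (ha : 0 ≤ a) (j : ℕ) :
    Real.Gamma (a + 1) ≤ Real.Gamma (j + a + 1) := by
  induction j with
  | zero => simp
  | succ j ih =>
    have hpos : 0 < (j : ℝ) + a + 1 := by positivity
    have hge : 1 ≤ (j : ℝ) + a + 1 := by linarith [(Nat.cast_nonneg j : (0 : ℝ) ≤ j)]
    rw [show ((j + 1 : ℕ) : ℝ) + a + 1 = (j + a + 1) + 1 by push_cast; ring,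
      Real.Gamma_add_one hpos.ne']
    exact ih.trans (le_mul_of_one_le_left (Real.Gamma_pos_of_pos hpos).le hge)

lemma summable_besselTerm {a : ℝ} (ha : 0 ≤ a) (t : ℝ) : Summable (besselTerm a t) := by
  have hGamma : 0 < Real.Gamma (a + 1) := Real.Gamma_pos_of_pos (by positivity)
  refine Summable.of_norm_bounded ((Real.summable_pow_div_factorial ((t / 2) ^ 2)).mul_left
    ((Real.Gamma (a + 1) * 2 ^ a)⁻¹)) fun j => ?_
  have hle := Gamma_le_Gamma_natCast_add ha j
  have := hGamma.trans_le hle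
  calc ‖besselTerm a t j‖
      = ((t / 2) ^ 2) ^ j / (j.factorial * (Real.Gamma (j + a + 1) * 2 ^ a)) := by
        rw [besselTerm, norm_div, norm_mul, norm_pow, norm_neg, norm_one, one_pow, one_mul, pow_mul,
          Real.norm_of_nonneg (by positivity), Real.norm_of_nonneg (by positivity), mul_assoc]
    _ ≤ ((t / 2) ^ 2) ^ j / (j.factorial * (Real.Gamma (a + 1) * 2 ^ a)) := by gcongr
    _ = (Real.Gamma (a + 1) * 2 ^ a)⁻¹ * (((t / 2) ^ 2) ^ j / j.factorial) := by
        rw [← div_div, ← div_eq_inv_mul]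

lemma besselTerm_zero_recurrence {a : ℝ} (ha : 0 ≤ a) (t : ℝ) :
    2 * (a + 1) * besselTerm (a + 1) t 0 = besselTerm a t 0 := by
  have hne : a + 1 ≠ 0 := by positivity
  have hGamma : Real.Gamma (a + 1 + 1) = (a + 1) * Real.Gamma (a + 1) := Real.Gamma_add_one hne
  simp only [besselTerm, Real.rpow_add_one two_ne_zero, Nat.cast_zero, zero_add, hGamma]
  field_simp

lemma besselTerm_succ_recurrence {a : ℝ} (ha : 0 ≤ a) (t : ℝ) (j : ℕ) :
    2 * (a + 1) * besselTerm (a + 1) t (j + 1) - besselTerm a t (j + 1)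
      = t ^ 2 * besselTerm (a + 2) t j := by
  have hne₁ : (j : ℝ) + a + 1 ≠ 0 := by positivity
  have hne₂ : (j : ℝ) + a + 1 + 1 ≠ 0 := by positivity
  have hGamma₁ : Real.Gamma ((j + 1 : ℕ) + a + 1) = (j + a + 1) * Real.Gamma (j + a + 1) := by
    rw [← Real.Gamma_add_one hne₁]; push_cast; ring_nf
  have hGamma₂ : Real.Gamma (j + (a + 2) + 1)
      = (j + a + 1 + 1) * ((j + a + 1) * Real.Gamma (j + a + 1)) := by
    rw [← Real.Gamma_add_one hne₁, ← Real.Gamma_add_one hne₂]; ring_nf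
  have hcast : ((j + 1 : ℕ) : ℝ) + (a + 1) + 1 = j + (a + 2) + 1 := by push_cast; ring
  have hrpow : (2 : ℝ) ^ (a + 2) = 2 ^ a * 2 ^ 2 := by
    exact_mod_cast Real.rpow_add_natCast two_ne_zero a 2
  rw [besselTerm, besselTerm, besselTerm, hcast, hGamma₁, hGamma₂, hrpow,
    Real.rpow_add_one two_ne_zero, Nat.factorial_succ, show 2 * (j + 1) = 2 * j + 2 by ring,
    pow_add (t / 2), pow_succ (-1 : ℝ)]
  push_cast
  field_simp
  ring

lemma besselJt_recurrence {a : ℝ} (ha : 0 ≤ a) (t : ℝ) :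
    besselJt a t + t ^ 2 * besselJt (a + 2) t = 2 * (a + 1) * besselJt (a + 1) t := by
  have hsum₀ := summable_besselTerm ha t
  have hsum₁ := (summable_besselTerm (a := a + 1) (by positivity) t).mul_left (2 * (a + 1))
  have hseries : ∑' j, (2 * (a + 1) * besselTerm (a + 1) t j - besselTerm a t j)
      = ∑' j, t ^ 2 * besselTerm (a + 2) t j := by
    rw [(hsum₁.sub hsum₀).tsum_eq_zero_add, besselTerm_zero_recurrence ha, sub_self, zero_add]
    exact tsum_congr (besselTerm_succ_recurrence ha t)
  rw [hsum₁.tsum_sub hsum₀, tsum_mul_left, tsum_mul_left] at hseries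
  change _ * besselJt (a + 1) t - besselJt a t = t ^ 2 * besselJt (a + 2) t at hseries
  linarith

/-- The function `z ↦ z^{-λ} J_{k+λ}(z)`, extended to all real `z` as the power series
`z^k J̃_{k+λ}(z)`. -/
def besselRadial (lam : ℝ) (k : ℕ) (z : ℝ) : ℝ := z ^ k * besselJt (k + lam) z

lemma besselRadial_recurrence {lam : ℝ} (hlam : 0 ≤ lam) (k : ℕ) (z : ℝ) :
    2 * (k + 1 + lam) * besselRadial lam (k + 1) z
      = z * (besselRadial lam k z + besselRadial lam (k + 2) z) := by
  have h := besselJt_recurrence (a := k + lam) (by positivity) z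
  unfold besselRadial
  push_cast
  rw [show (k : ℝ) + 1 + lam = k + lam + 1 by ring, show (k : ℝ) + 2 + lam = k + lam + 2 by ring]
  linear_combination (-z ^ (k + 1)) * h

lemma rpow_neg_mul_besselJ (lam : ℝ) (k : ℕ) {z : ℝ} (hz : 0 < z) :
    z ^ (-lam) * besselJ (k + lam) z = besselRadial lam k z := by
  unfold besselRadial besselJ besselJt
  rw [← tsum_mul_left, ← tsum_mul_left]
  refine tsum_congr fun j => ?_
  have hpow : (z / 2) ^ (2 * (j : ℝ) + (k + lam))
      = (z / 2) ^ (2 * j) * (z ^ k * z ^ lam / 2 ^ (k + lam)) := by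
    rw [Real.rpow_add (by positivity), Real.div_rpow hz.le zero_le_two (k + lam),
      Real.rpow_add hz, Real.rpow_natCast]
    congr 1
    exact_mod_cast Real.rpow_natCast (z / 2) (2 * j)
  rw [hpow, Real.rpow_neg hz.le]
  field_simp

lemma measurable_besselRadial {lam : ℝ} (hlam : 0 ≤ lam) (k : ℕ) :
    Measurable (besselRadial lam k) := by
  refine Measurable.mul (by fun_prop) (measurable_of_tendsto_metrizable
    (f := fun n z => ∑ j ∈ Finset.range n, besselTerm (k + lam) z j) (fun n => ?_) ?_)
  · unfold besselTerm
    fun_prop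
  · rw [tendsto_pi_nhds]
    exact fun z => (summable_besselTerm (by positivity) z).hasSum.tendsto_sum_nat

lemma mul_pow_div_factorial_mul_sphereMoment (lam z : ℝ) (l j : ℕ) :
    (Complex.I * z) ^ (l + 2 * j) / (l + 2 * j).factorial * sphereMoment lam (l + 2 * j) l
      = (2 * Real.pi ^ (lam + 1) * 2 ^ lam : ℝ) * Complex.I ^ l
        * (z ^ l * besselTerm (l + lam) z j : ℝ) := by
  have hI : Complex.I ^ (l + 2 * j) = Complex.I ^ l * ((-1 : ℝ) ^ j : ℝ) := by
    rw [pow_add, pow_mul, Complex.I_sq]; push_cast; rfl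
  have hreal : (-1) ^ j * z ^ (l + 2 * j) / (l + 2 * j).factorial * sphereMoment lam (l + 2 * j) l
      = 2 * Real.pi ^ (lam + 1) * 2 ^ lam * (z ^ l * besselTerm (l + lam) z j) := by
    rw [sphereMoment_add_two_mul, besselTerm, Real.rpow_add two_pos, Real.rpow_natCast,
      show (j : ℝ) + (l + lam) + 1 = l + j + lam + 1 by ring, pow_add, pow_add, div_pow]
    field_simp
  rw [mul_pow, hI, mul_right_comm _ (Complex.I ^ l), ← Complex.ofReal_mul, ← hreal]
  push_cast
  ring

lemma hasSum_mul_sphereMoment {lam : ℝ} (hlam : 0 ≤ lam) (l : ℕ) (z : ℝ) :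
    HasSum (fun n : ℕ => (Complex.I * z) ^ n / n.factorial * sphereMoment lam n l)
      ((2 * Real.pi ^ (lam + 1) * 2 ^ lam : ℝ) * Complex.I ^ l * besselRadial lam l z) := by
  have hinj : Function.Injective fun j : ℕ => l + 2 * j := fun i j h => by simpa using h
  refine (hinj.hasSum_iff fun n hn => ?_).mp ?_
  · rw [sphereMoment_eq_zero _ fun j hj => hn ⟨j, hj.symm⟩, Complex.ofReal_zero, mul_zero]
  · simp_rw [Function.comp_def, mul_pow_div_factorial_mul_sphereMoment]
    refine HasSum.mul_left _ (Complex.hasSum_ofReal.mpr (HasSum.mul_left _ ?_))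
    exact (summable_besselTerm (by positivity) z).hasSum

/-- The `n`-th term of the expansion of `exp (√-1 z ⟨x, η⟩) H x` in powers of `z`. -/
def planeWaveTerm (H : (Fin m → ℝ) → ℂ) (η : Fin m → ℝ) (z : ℝ) (n : ℕ) (x : Fin m → ℝ) : ℂ :=
  (Complex.I * z) ^ n / n.factorial * (ip x η ^ n • H x)

lemma tsum_planeWaveTerm (H : (Fin m → ℝ) → ℂ) (η : Fin m → ℝ) (z : ℝ) (x : Fin m → ℝ) :
    ∑' n, planeWaveTerm H η z n x = Complex.exp ((z * ip x η : ℝ) * Complex.I) * H x := by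
  rw [Complex.exp_eq_exp_ℂ, NormedSpace.exp_eq_tsum_div, ← tsum_mul_right]
  refine tsum_congr fun n => ?_
  simp only [planeWaveTerm, Complex.real_smul]
  push_cast
  ring

lemma norm_planeWaveTerm_le (H : (Fin m → ℝ) → ℂ) {η x : Fin m → ℝ} (hη : nrm η = 1)
    (hx : nrm x = 1) (z : ℝ) (n : ℕ) :
    ‖planeWaveTerm H η z n x‖ ≤ |z| ^ n / n.factorial * ‖H x‖ := by
  simp only [planeWaveTerm, norm_mul, norm_div, norm_pow, norm_smul, Complex.norm_I, one_mul,
    Complex.norm_natCast, Complex.norm_real, Real.norm_eq_abs]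
  gcongr
  exact mul_le_of_le_one_left (norm_nonneg _)
    (pow_le_one₀ (abs_nonneg _) (abs_ip_le_one hx hη))

lemma IsSolidHarmonic.hasSum_sphereIntegral [NeZero m] {l : ℕ} {H : (Fin m → ℝ) → ℂ}
    (hH : IsSolidHarmonic l H) {η : Fin m → ℝ} (hη : ip η η = 1) (z : ℝ) :
    HasSum (fun n : ℕ => (Complex.I * z) ^ n / n.factorial
        * sphereMoment (((m : ℝ) - 2) / 2) n l * H η)
      (sphereIntegral fun x => Complex.exp ((z * ip x η : ℝ) * Complex.I) * H x) := by
  have hcont := hH.contDiff.continuous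
  have hip := continuous_ip_left η
  have hη' : nrm η = 1 := by rw [nrm, hη, Real.sqrt_one]
  have hint (n : ℕ) := integrable_sphere (h := planeWaveTerm H η z n)
    (by unfold planeWaveTerm; fun_prop)
  have hsum : Summable fun n =>
      ∫ ξ : UnitSphere m, ‖planeWaveTerm H η z n (WithLp.ofLp ξ.1)‖ ∂sphereMeasure m := by
    refine Summable.of_nonneg_of_le (fun n => integral_nonneg fun _ => norm_nonneg _) (fun n => ?_)
      ((Real.summable_pow_div_factorial |z|).mul_right
        (∫ ξ, ‖H (WithLp.ofLp ξ.1)‖ ∂sphereMeasure m))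
    rw [← integral_const_mul]
    exact integral_mono (hint n).norm ((integrable_sphere hcont).norm.const_mul _)
      fun ξ => norm_planeWaveTerm_le H hη' (nrm_ofLp_sphere ξ) z n
  have hterm (n : ℕ) : ∫ ξ, planeWaveTerm H η z n (WithLp.ofLp ξ.1) ∂sphereMeasure m
      = (Complex.I * z) ^ n / n.factorial * sphereMoment (((m : ℝ) - 2) / 2) n l * H η := by
    have hmoment := hH.sphereIntegral_ip_pow_smul hη n
    rw [sphereIntegral] at hmoment
    simp only [planeWaveTerm]
    rw [integral_const_mul, hmoment, Complex.real_smul, mul_assoc]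
  have h := hasSum_integral_of_summable_integral_norm hint hsum
  simp_rw [hterm, tsum_planeWaveTerm] at h
  exact h

lemma IsSolidHarmonic.sphereIntegral_exp_mul (hm : 2 ≤ m) {l : ℕ} {H : (Fin m → ℝ) → ℂ}
    (hH : IsSolidHarmonic l H) {η : Fin m → ℝ} (hη : ip η η = 1) (z : ℝ) :
    (sphereIntegral fun x => Complex.exp ((z * ip x η : ℝ) * Complex.I) * H x)
      = (2 * Real.pi ^ (((m : ℝ) - 2) / 2 + 1) * 2 ^ (((m : ℝ) - 2) / 2) : ℝ) * Complex.I ^ l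
        * besselRadial (((m : ℝ) - 2) / 2) l z * H η := by
  have : NeZero m := ⟨by lia⟩
  have hm' : (2 : ℝ) ≤ m := by exact_mod_cast hm
  exact (hH.hasSum_sphereIntegral hη z).unique
    ((hasSum_mul_sphereMoment (by linarith) l z).mul_right _)

/-- The complex linear form `x ↦ x_i + √-1 x_j`. -/
def complexCoord (i j : Fin m) : (Fin m → ℝ) →L[ℝ] ℂ :=
  (ContinuousLinearMap.proj i : (Fin m → ℝ) →L[ℝ] ℝ).smulRight (1 : ℂ)
    + (ContinuousLinearMap.proj j : (Fin m → ℝ) →L[ℝ] ℝ).smulRight Complex.I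

lemma complexCoord_apply (i j : Fin m) (x : Fin m → ℝ) :
    complexCoord i j x = x i + x j * Complex.I := by
  simp [complexCoord]

lemma norm_complexCoord_le {i j : Fin m} (hij : i ≠ j) (x : Fin m → ℝ) :
    ‖complexCoord i j x‖ ≤ nrm x := by
  rw [complexCoord_apply, Complex.norm_add_mul_I, nrm]
  refine Real.sqrt_le_sqrt ?_
  rw [ip, ← Finset.sum_pair (f := fun i => x i ^ 2) hij]
  simp_rw [← sq]
  exact Finset.sum_le_univ_sum_of_nonneg fun i => sq_nonneg _

lemma dirDeriv_mul_complexCoord_pow (i j : Fin m) (k : ℕ) (c : ℂ) (v : Fin m → ℝ) :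
    dirDeriv v (fun x => c * complexCoord i j x ^ k)
      = fun x => (c * k * complexCoord i j v) * complexCoord i j x ^ (k - 1) := by
  funext x
  have h := (((complexCoord i j).hasFDerivAt (x := x)).pow k).const_mul c
  rw [dirDeriv, h.fderiv]
  simp
  ring

lemma sum_complexCoord_single_sq {i j : Fin m} (hij : i ≠ j) :
    ∑ n : Fin m, complexCoord i j (Pi.single n 1) ^ 2 = 0 := by
  have hterm (n : Fin m) : complexCoord i j (Pi.single n 1) ^ 2
      = (if n = i then 1 else 0) + if n = j then -1 else 0 := by
    rw [complexCoord_apply]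
    rcases eq_or_ne n i with rfl | hi
    · simp [hij, hij.symm]
    · rcases eq_or_ne n j with rfl | hj
      · simp [hi, hij]
      · simp [hi, hj, hi.symm, hj.symm]
  simp [hterm, Finset.sum_add_distrib]

lemma isSolidHarmonic_complexCoord_pow {i j : Fin m} (hij : i ≠ j) (k : ℕ) :
    IsSolidHarmonic k fun x => complexCoord i j x ^ k where
  contDiff := (complexCoord i j).contDiff.pow k
  map_smul c x := by rw [map_smul, smul_pow]
  laplacian_eq_zero x := by
    have hone : (fun x => complexCoord i j x ^ k) = fun x => 1 * complexCoord i j x ^ k := by simp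
    have hfactor (n : Fin m) : 1 * (k : ℂ) * complexCoord i j (Pi.single n 1) * (k - 1 : ℕ)
        * complexCoord i j (Pi.single n 1) * complexCoord i j x ^ (k - 1 - 1)
        = (k * (k - 1 : ℕ) * complexCoord i j x ^ (k - 1 - 1))
          * complexCoord i j (Pi.single n 1) ^ 2 := by ring
    simp_rw [hone, dirDeriv_mul_complexCoord_pow, hfactor]
    rw [← Finset.mul_sum, sum_complexCoord_single_sq hij, mul_zero]

-- Apply the Hecke–Bochner formula to the harmonic `(x₀ + √-1 x₁)^k`, which is `1` at `η = e₀` and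
-- bounded by `1` on the sphere.
lemma exists_abs_besselRadial_le (hm : 2 ≤ m) :
    ∃ C : ℝ, 0 ≤ C ∧ ∀ k z, |besselRadial (((m : ℝ) - 2) / 2) k z| ≤ C := by
  set lam := ((m : ℝ) - 2) / 2
  let i₀ : Fin m := ⟨0, by lia⟩
  let i₁ : Fin m := ⟨1, by lia⟩
  have hne : i₀ ≠ i₁ := by simp [i₀, i₁]
  have hη : ip (Pi.single i₀ 1 : Fin m → ℝ) (Pi.single i₀ 1) = 1 := by simp [ip, Pi.single_apply]
  have hone : complexCoord i₀ i₁ (Pi.single i₀ 1) = 1 := by simp [complexCoord_apply, hne.symm]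
  obtain ⟨c, hc, hbochner⟩ : ∃ c : ℝ, 0 < c ∧ ∀ k z, (sphereIntegral fun x => Complex.exp
      ((z * ip x (Pi.single i₀ 1) : ℝ) * Complex.I) * complexCoord i₀ i₁ x ^ k)
        = c * Complex.I ^ k * besselRadial lam k z := by
    refine ⟨2 * Real.pi ^ (lam + 1) * 2 ^ lam, by positivity, fun k z => ?_⟩
    rw [(isSolidHarmonic_complexCoord_pow hne k).sphereIntegral_exp_mul hm hη, hone, one_pow,
      mul_one]
  refine ⟨(sphereMeasure m).real Set.univ / c, by positivity, fun k z => ?_⟩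
  have hnorm := congrArg norm (hbochner k z)
  simp only [norm_mul, norm_pow, Complex.norm_I, one_pow, mul_one, Complex.norm_real,
    Real.norm_eq_abs, abs_of_pos hc] at hnorm
  rw [le_div_iff₀ hc, mul_comm, ← hnorm]
  refine (norm_integral_le_of_norm_le_const (C := 1) (ae_of_all _ fun ξ => ?_)).trans (by simp)
  rw [norm_mul, Complex.norm_exp_ofReal_mul_I, one_mul, norm_pow]
  exact pow_le_one₀ (norm_nonneg _) ((norm_complexCoord_le hne _).trans (nrm_ofLp_sphere ξ).le)

lemma succ_mul_abs_besselRadial_le {lam : ℝ} (hlam : 0 ≤ lam) (k : ℕ) {z : ℝ} (hz : 0 ≤ z) :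
    (k + 2) * |besselRadial lam (k + 1) z|
      ≤ z * (|besselRadial lam k z| + |besselRadial lam (k + 2) z|) := by
  have hcoef : (k : ℝ) + 2 ≤ 2 * (k + 1 + lam) := by linarith [(Nat.cast_nonneg k : (0 : ℝ) ≤ k)]
  calc (k + 2) * |besselRadial lam (k + 1) z|
      ≤ 2 * (k + 1 + lam) * |besselRadial lam (k + 1) z| := by gcongr
    _ = |2 * (k + 1 + lam) * besselRadial lam (k + 1) z| := by
        rw [abs_mul, abs_of_nonneg (by positivity : 0 ≤ 2 * (k + 1 + lam))]
    _ = z * |besselRadial lam k z + besselRadial lam (k + 2) z| := by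
        rw [besselRadial_recurrence hlam, abs_mul, abs_of_nonneg hz]
    _ ≤ z * (|besselRadial lam k z| + |besselRadial lam (k + 2) z|) := by
        gcongr; exact abs_add_le _ _

lemma succ_pow_mul_abs_besselRadial_le {lam C z : ℝ} (hlam : 0 ≤ lam) (hz : 0 ≤ z) {q : ℕ}
    (hdecay : ∀ k : ℕ, ((k : ℝ) + 1) ^ q * |besselRadial lam k z| ≤ C * (1 + z) ^ q)
    (k : ℕ) :
    ((k + 1 : ℕ) + 1 : ℝ) ^ (q + 1) * |besselRadial lam (k + 1) z|
      ≤ (2 ^ q + 1) * C * (1 + z) ^ (q + 1) := by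
  have hbound : 0 ≤ C * (1 + z) ^ q := le_trans (by positivity) (hdecay 0)
  have hlower : ((k : ℝ) + 2) ^ q * |besselRadial lam k z| ≤ 2 ^ q * (C * (1 + z) ^ q) :=
    calc ((k : ℝ) + 2) ^ q * |besselRadial lam k z|
        ≤ (2 * ((k : ℝ) + 1)) ^ q * |besselRadial lam k z| := by
          gcongr; linarith [(Nat.cast_nonneg k : (0 : ℝ) ≤ k)]
      _ = 2 ^ q * (((k : ℝ) + 1) ^ q * |besselRadial lam k z|) := by rw [mul_pow, mul_assoc]
      _ ≤ 2 ^ q * (C * (1 + z) ^ q) := mul_le_mul_of_nonneg_left (hdecay k) (by positivity)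
  have hupper : ((k : ℝ) + 2) ^ q * |besselRadial lam (k + 2) z| ≤ C * (1 + z) ^ q := by
    refine le_trans ?_ (hdecay (k + 2))
    push_cast
    gcongr ?_ ^ q * _
    linarith
  calc ((k + 1 : ℕ) + 1 : ℝ) ^ (q + 1) * |besselRadial lam (k + 1) z|
      = ((k : ℝ) + 2) ^ q * ((k + 2) * |besselRadial lam (k + 1) z|) := by push_cast; ring
    _ ≤ ((k : ℝ) + 2) ^ q * (z * (|besselRadial lam k z| + |besselRadial lam (k + 2) z|)) :=
        mul_le_mul_of_nonneg_left (succ_mul_abs_besselRadial_le hlam k hz) (by positivity)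
    _ = z * (((k : ℝ) + 2) ^ q * |besselRadial lam k z|
          + ((k : ℝ) + 2) ^ q * |besselRadial lam (k + 2) z|) := by ring
    _ ≤ z * (2 ^ q * (C * (1 + z) ^ q) + C * (1 + z) ^ q) := by gcongr
    _ ≤ (1 + z) * (2 ^ q * (C * (1 + z) ^ q) + C * (1 + z) ^ q) :=
        mul_le_mul_of_nonneg_right (by linarith)
          (add_nonneg (mul_nonneg (by positivity) hbound) hbound)
    _ = (2 ^ q + 1) * C * (1 + z) ^ (q + 1) := by ring

lemma exists_pow_mul_abs_besselRadial_le (hm : 2 ≤ m) (q : ℕ) :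
    ∃ C : ℝ, 0 ≤ C ∧ ∀ (k : ℕ) (z : ℝ), 0 ≤ z →
      ((k : ℝ) + 1) ^ q * |besselRadial (((m : ℝ) - 2) / 2) k z| ≤ C * (1 + z) ^ q := by
  have hm' : (2 : ℝ) ≤ m := by exact_mod_cast hm
  obtain ⟨C₀, hC₀, hbound⟩ := exists_abs_besselRadial_le hm
  induction q with
  | zero => exact ⟨C₀, hC₀, fun k z _ => by simpa using hbound k z⟩
  | succ q ih =>
    obtain ⟨C, hC, hdecay⟩ := ih
    refine ⟨C₀ + (2 ^ q + 1) * C, by positivity, fun k z hz => ?_⟩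
    rcases k with _ | k
    · calc _ = |besselRadial (((m : ℝ) - 2) / 2) 0 z| := by simp
        _ ≤ C₀ + (2 ^ q + 1) * C := (hbound 0 z).trans (le_add_of_nonneg_right (by positivity))
        _ ≤ (C₀ + (2 ^ q + 1) * C) * (1 + z) ^ (q + 1) :=
            le_mul_of_one_le_right (by positivity) (one_le_pow₀ (by linarith))
    · refine (succ_pow_mul_abs_besselRadial_le (by linarith) hz
        (fun k => hdecay k z hz) k).trans ?_
      gcongr
      linarith

end Bessel

/-! ### Spherical monogenics -/

section Monogenic

open scoped Cl ContDiff

variable {l : ℕ} {M : (Fin m → ℝ) → Cl m}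

/-- Spherical monogenics of degree `l`: smooth homogeneous solutions of the Dirac equation. -/
structure IsSphericalMonogenic (l : ℕ) (M : (Fin m → ℝ) → Cl m) : Prop
    extends IsSmoothHomogeneous l M where
  dirac_eq_zero : ∀ x, dirac M x = 0

/-- Clifford multiplication as a continuous bilinear map. -/
def mulCLM (m : ℕ) : Cl m →L[ℝ] Cl m →L[ℝ] Cl m :=
  LinearMap.toContinuousLinearMap
    ((LinearMap.toContinuousLinearMap : (Cl m →ₗ[ℝ] Cl m) ≃ₗ[ℝ] _).toLinearMap ∘ₗ
      LinearMap.mul ℝ (Cl m))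

lemma mulCLM_apply (a b : Cl m) : mulCLM m a b = a * b := rfl

/-- The embedding `vec` of `ℝ^m` into the Clifford algebra as a continuous linear map. -/
def vecCLM (m : ℕ) : (Fin m → ℝ) →L[ℝ] Cl m :=
  LinearMap.toContinuousLinearMap
    { toFun := vec m
      map_add' := fun x y => by simp [vec, add_smul, Finset.sum_add_distrib]
      map_smul' := fun c x => by
        simp only [vec, Finset.smul_sum, Pi.smul_apply, smul_eq_mul, ofReal_smul, mul_smul,
          RingHom.id_apply] }

lemma vecCLM_apply (x : Fin m → ℝ) : vecCLM m x = vec m x := rfl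

lemma vec_smul (c : ℝ) (x : Fin m → ℝ) : vec m (c • x) = c • vec m x := (vecCLM m).map_smul c x

lemma vec_single (i : Fin m) : vec m (Pi.single i 1) = e m i := by
  simp only [vec, ofReal_smul, Pi.single_apply, ite_smul, one_smul, zero_smul,
    Finset.sum_ite_eq', Finset.mem_univ, if_true]

lemma dirDeriv_const_mul (a : Cl m) {f : (Fin m → ℝ) → Cl m} (hf : Differentiable ℝ f)
    (v x : Fin m → ℝ) : dirDeriv v (fun x => a * f x) x = a * dirDeriv v f x :=
  congrArg (· v) ((mulCLM m a).hasFDerivAt.comp x (hf x).hasFDerivAt).fderiv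

lemma differentiable_const_mul (a : Cl m) {f : (Fin m → ℝ) → Cl m} (hf : Differentiable ℝ f) :
    Differentiable ℝ fun x => a * f x :=
  (mulCLM m a).differentiable.comp hf

lemma dirDeriv_vec_mul {f : (Fin m → ℝ) → Cl m} (hf : Differentiable ℝ f) (v x : Fin m → ℝ) :
    dirDeriv v (fun x => vec m x * f x) x = vec m v * f x + vec m x * dirDeriv v f x := by
  have h := ((mulCLM m).isBoundedBilinearMap.hasFDerivAt (vecCLM m x, f x)).comp x
    ((vecCLM m).hasFDerivAt.prodMk (hf x).hasFDerivAt)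
  refine (congrArg (· v) h.fderiv).trans ?_
  simp [IsBoundedBilinearMap.deriv, mulCLM_apply, vecCLM_apply, dirDeriv, add_comm]

namespace IsSphericalMonogenic

lemma sum_e_mul_dirDeriv_dirDeriv (hM : IsSphericalMonogenic l M) (v x : Fin m → ℝ) :
    ∑ i, e m i * dirDeriv v (dirDeriv (Pi.single i 1) M) x = 0 := by
  have hd (i : Fin m) : Differentiable ℝ (dirDeriv (Pi.single i 1) M) :=
    (hM.toIsSmoothHomogeneous.dirDeriv _).differentiable
  calc ∑ i, e m i * dirDeriv v (dirDeriv (Pi.single i 1) M) x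
      = dirDeriv v (fun x => ∑ i, e m i * dirDeriv (Pi.single i 1) M x) x := by
        rw [dirDeriv_finsetSum fun i _ => differentiable_const_mul _ (hd i)]
        exact Finset.sum_congr rfl fun i _ => (dirDeriv_const_mul _ (hd i) v x).symm
    _ = 0 := by
        rw [show (fun x => ∑ i, e m i * dirDeriv (Pi.single i 1) M x) = fun _ => 0 from
          funext hM.dirac_eq_zero, dirDeriv_const]

-- The Dirac operator squares to minus the Laplacian: the mixed terms `e_i e_j ∂_i ∂_j` cancel.
lemma isSolidHarmonic (hM : IsSphericalMonogenic l M) : IsSolidHarmonic l M where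
  toIsSmoothHomogeneous := hM.toIsSmoothHomogeneous
  laplacian_eq_zero x := by
    have hsquare : ∑ j, ∑ i, e m j
        * (e m i * dirDeriv (Pi.single j 1) (dirDeriv (Pi.single i 1) M) x) = 0 := by
      simp_rw [← Finset.mul_sum, hM.sum_e_mul_dirDeriv_dirDeriv, mul_zero, Finset.sum_const_zero]
    have hmixed (i j : Fin m) : (if i < j then
        e m i * (e m j * dirDeriv (Pi.single i 1) (dirDeriv (Pi.single j 1) M) x)
          + e m j * (e m i * dirDeriv (Pi.single j 1) (dirDeriv (Pi.single i 1) M) x) else 0)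
        = 0 := by
      split_ifs with hij
      · rw [dirDeriv_comm hM.contDiff (Pi.single j 1), ← mul_assoc, ← mul_assoc,
          e_mul_e_anticomm hij.ne', neg_mul, add_neg_cancel]
      · rfl
    have hdiag (i : Fin m) (a : Cl m) : e m i * (e m i * a) = -a := by
      rw [← mul_assoc, e_mul_e_self, neg_one_mul]
    rw [sum_sum_eq_sum_lt_add_sum_diag] at hsquare
    simpa [hmixed, hdiag] using hsquare

end IsSphericalMonogenic

lemma contDiff_vec_mul {f : (Fin m → ℝ) → Cl m} (hf : ContDiff ℝ ∞ f) :
    ContDiff ℝ ∞ fun x => vec m x * f x :=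
  (mulCLM m).isBoundedBilinearMap.contDiff.comp₂ (vecCLM m).contDiff hf

lemma IsSmoothHomogeneous.vec_mul (hM : IsSmoothHomogeneous l M) :
    IsSmoothHomogeneous (l + 1) fun x => vec m x * M x where
  contDiff := contDiff_vec_mul hM.contDiff
  map_smul c x := by
    rw [vec_smul, hM.map_smul, smul_mul_assoc, mul_smul_comm, smul_smul, pow_succ']

lemma dirDeriv_dirDeriv_vec_mul {f : (Fin m → ℝ) → Cl m} (hf : ContDiff ℝ ∞ f)
    (v x : Fin m → ℝ) :
    dirDeriv v (dirDeriv v fun x => vec m x * f x) x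
      = 2 • (vec m v * dirDeriv v f x) + vec m x * dirDeriv v (dirDeriv v f) x := by
  have hf' := contDiff_dirDeriv hf v
  have hd : Differentiable ℝ f := hf.differentiable (by simp)
  have hd' : Differentiable ℝ (dirDeriv v f) := hf'.differentiable (by simp)
  have hfirst : dirDeriv v (fun x => vec m x * f x)
      = fun x => vec m v * f x + vec m x * dirDeriv v f x := funext (dirDeriv_vec_mul hd v)
  have hadd := fderiv_fun_add (differentiable_const_mul (vec m v) hd x)
    ((contDiff_vec_mul hf').differentiable (by simp) x)
  calc dirDeriv v (dirDeriv v fun x => vec m x * f x) x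
      = dirDeriv v (fun x => vec m v * f x) x
          + dirDeriv v (fun x => vec m x * dirDeriv v f x) x := by
        rw [hfirst]; exact congrArg (· v) hadd
    _ = 2 • (vec m v * dirDeriv v f x) + vec m x * dirDeriv v (dirDeriv v f) x := by
        rw [dirDeriv_const_mul _ hd, dirDeriv_vec_mul hd', two_nsmul, add_assoc]

lemma IsSphericalMonogenic.isSolidHarmonic_vec_mul (hM : IsSphericalMonogenic l M) :
    IsSolidHarmonic (l + 1) fun x => vec m x * M x where
  toIsSmoothHomogeneous := hM.toIsSmoothHomogeneous.vec_mul
  laplacian_eq_zero x := by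
    have hdirac : ∑ i, e m i * dirDeriv (Pi.single i 1) M x = 0 := hM.dirac_eq_zero x
    simp_rw [dirDeriv_dirDeriv_vec_mul hM.contDiff, vec_single]
    rw [Finset.sum_add_distrib, ← Finset.smul_sum, ← Finset.mul_sum, hdirac,
      hM.isSolidHarmonic.laplacian_eq_zero, mul_zero, smul_zero, add_zero]

end Monogenic

/-! ### The kernel as a series -/

section Kernel

open scoped Cl

lemma summable_inv_natCast_add_one_sq : Summable fun k : ℕ => (((k : ℝ) + 1) ^ 2)⁻¹ := by
  exact_mod_cast (summable_nat_add_iff 1).mpr (Real.summable_nat_pow_inv.mpr one_lt_two)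

lemma exists_abs_besselRadial_mul_gegShift_le (hm : 2 ≤ m) :
    ∃ (C : ℝ) (p : ℕ), 0 ≤ C ∧ ∀ (j k : ℕ) (w z : ℝ), |w| ≤ 1 → 0 ≤ z →
      |besselRadial (((m : ℝ) - 2) / 2) k z * gegShift (((m : ℝ) - 2) / 2 + 1) j k w|
        ≤ ((k + 1 : ℝ) ^ 2)⁻¹ * (C * (1 + z) ^ p) := by
  have hm' : (2 : ℝ) ≤ m := by exact_mod_cast hm
  obtain ⟨q, hq⟩ := exists_abs_gegShift_le (mu := ((m : ℝ) - 2) / 2 + 1) (by linarith)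
  obtain ⟨C, hC, hdecay⟩ := exists_pow_mul_abs_besselRadial_le hm (q + 2)
  refine ⟨C, q + 2, hC, fun j k w z hw hz => ?_⟩
  rw [← div_eq_inv_mul, le_div_iff₀ (by positivity), abs_mul]
  calc |besselRadial (((m : ℝ) - 2) / 2) k z| * |gegShift (((m : ℝ) - 2) / 2 + 1) j k w|
        * ((k : ℝ) + 1) ^ 2
      ≤ |besselRadial (((m : ℝ) - 2) / 2) k z| * ((k : ℝ) + 1) ^ q * ((k : ℝ) + 1) ^ 2 := by
        gcongr
        exact hq j k w hw
    _ = ((k : ℝ) + 1) ^ (q + 2) * |besselRadial (((m : ℝ) - 2) / 2) k z| := by ring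
    _ ≤ C * (1 + z) ^ (q + 2) := hdecay k z hz

variable {lam w z : ℝ} {u : ℂ}

lemma summable_mul_besselRadial_mul_gegShift (hm : 2 ≤ m) (hlam : lam = ((m : ℝ) - 2) / 2)
    (hw : |w| ≤ 1) (hz : 0 ≤ z) {c : ℕ → ℂ} {B : ℝ} (hc : ∀ k, ‖c k‖ ≤ B) (j : ℕ) :
    Summable fun k => c k * ((besselRadial lam k z * gegShift (lam + 1) j k w : ℝ) : ℂ) := by
  subst hlam
  obtain ⟨C, p, -, hbound⟩ := exists_abs_besselRadial_mul_gegShift_le hm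
  refine .of_norm_bounded
    ((summable_inv_natCast_add_one_sq.mul_right (C * (1 + z) ^ p)).mul_left B) fun k => ?_
  rw [norm_mul, Complex.norm_real, Real.norm_eq_abs]
  exact mul_le_mul (hc k) (hbound j k w z hw hz) (abs_nonneg _) ((norm_nonneg _).trans (hc k))

lemma norm_add_neg_one_pow_le (u : ℂ) (k : ℕ) : ‖u + (-1) ^ k‖ ≤ ‖u‖ + 1 :=
  (norm_add_le _ _).trans (by simp)

lemma norm_sub_neg_one_pow_le (u : ℂ) (k : ℕ) : ‖u - (-1) ^ k‖ ≤ ‖u‖ + 1 :=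
  (norm_sub_le _ _).trans (by simp)

lemma hasSum_AfunR (hm : 2 ≤ m) (hlam : lam = ((m : ℝ) - 2) / 2) (hw : |w| ≤ 1) (hz : 0 ≤ z) :
    HasSum (fun k => (2 ^ (lam - 1) * Real.Gamma (lam + 1) : ℝ) * ((u + (-1) ^ k) *
        ((besselRadial lam k z * geg lam k w : ℝ) : ℂ)))
      (AfunR u lam w z) := by
  have hs := summable_mul_besselRadial_mul_gegShift hm hlam hw hz (norm_add_neg_one_pow_le u)
  refine (Summable.hasSum ?_).mul_left _
  refine (((hs 0).sub ((hs 1).mul_left (2 * w : ℂ))).add (hs 2)).congr fun k => ?_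
  rw [geg_eq_gegShift]
  push_cast
  ring

lemma hasSum_BfunR (hm : 2 ≤ m) (hlam : lam = ((m : ℝ) - 2) / 2) (hw : |w| ≤ 1) (hz : 0 ≤ z) :
    HasSum (fun k => -((2 ^ (lam - 1) * Real.Gamma (lam + 1) : ℝ) : ℂ) * ((u - (-1) ^ k) *
        ((besselRadial lam k z * gegT lam k w : ℝ) : ℂ)))
      (BfunR u lam w z) := by
  have hs := summable_mul_besselRadial_mul_gegShift hm hlam hw hz (norm_sub_neg_one_pow_le u)
  refine (Summable.hasSum ?_).mul_left _
  refine ((hs 0).sub (hs 2)).congr fun k => ?_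
  rw [gegT_eq_gegShift]
  push_cast
  ring

lemma hasSum_CfunR (hm : 2 ≤ m) (hlam : lam = ((m : ℝ) - 2) / 2) (hw : |w| ≤ 1) (hz : 0 < z) :
    HasSum (fun k => -((2 ^ lam * Real.Gamma (lam + 1) : ℝ) : ℂ) * ((z : ℂ)⁻¹ * ((u + (-1) ^ k) *
        ((besselRadial lam k z * gegShift (lam + 1) 1 k w : ℝ) : ℂ))))
      (CfunR u lam w z) := by
  have hs := summable_mul_besselRadial_mul_gegShift hm hlam hw hz.le (norm_add_neg_one_pow_le u) 1
  have hterm (k : ℕ) : (u + (-1 : ℂ) ^ k) * ((z ^ (k - 1) * besselJt ((k : ℝ) + lam) z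
        * (if 1 ≤ k then geg (lam + 1) (k - 1) w else 0) : ℝ) : ℂ)
      = (z : ℂ)⁻¹ * ((u + (-1) ^ k) *
        ((besselRadial lam k z * gegShift (lam + 1) 1 k w : ℝ) : ℂ)) := by
    have hz' : (z : ℂ) ≠ 0 := by exact_mod_cast hz.ne'
    cases k with
    | zero => simp [gegShift, shift]
    | succ k =>
      simp only [besselRadial, gegShift, shift, Nat.add_sub_cancel, pow_succ z]
      push_cast
      field_simp
  rw [CfunR, tsum_congr hterm]
  exact (hs.mul_left _).hasSum.mul_left _

/-- The angular part of the `k`-th term of the kernel `K_-(x, y)` applied to a Clifford number `a`,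
at the unit vectors `ξ = x/|x|` and `η = y/|y|`; the parameter `u` stands for `i^m`. -/
def kernelAngular (u : ℂ) (lam : ℝ) (k : ℕ) (η ξ : Fin m → ℝ) (a : Cl m) : Cl m :=
  ((-1) ^ k * (gegShift (lam + 1) 0 k (ip ξ η) : ℂ) + u * gegShift (lam + 1) 2 k (ip ξ η)) • a
    + ((u + (-1) ^ k) * (gegShift (lam + 1) 1 k (ip ξ η) : ℂ)) • (vec m η * (vec m ξ * a))

/-- The radial part of the `k`-th term of the kernel `K_-(x, y)`, as a function of `z = |x||y|`. -/
def kernelRadial (lam : ℝ) (k : ℕ) (z : ℝ) : ℝ :=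
  2 ^ lam * Real.Gamma (lam + 1) * besselRadial lam k z

/-- The `k`-th term in the expansion of `K_-(x, y) a` over `k`, for nonzero `x` and `y`. -/
def kernelTerm (k : ℕ) (x y : Fin m → ℝ) (a : Cl m) : Cl m :=
  kernelRadial (((m : ℝ) - 2) / 2) k (nrm x * nrm y) •
    kernelAngular (Complex.I ^ m) (((m : ℝ) - 2) / 2) k ((nrm y)⁻¹ • y) ((nrm x)⁻¹ • x) a

variable {x y : Fin m → ℝ}

lemma ip_normalize (x y : Fin m → ℝ) :
    ip ((nrm x)⁻¹ • x) ((nrm y)⁻¹ • y) = ip x y / (nrm x * nrm y) := by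
  rw [ip_smul_left, ip_smul_right]
  field_simp

lemma abs_ip_normalize_le (x y : Fin m → ℝ) : |ip ((nrm x)⁻¹ • x) ((nrm y)⁻¹ • y)| ≤ 1 := by
  have hz : 0 ≤ nrm x * nrm y := mul_nonneg (nrm_nonneg x) (nrm_nonneg y)
  rw [ip_normalize, abs_div, abs_of_nonneg hz]
  exact div_le_one_of_le₀ (abs_ip_le x y) hz

lemma wedge_mul_eq (hx : x ≠ 0) (hy : y ≠ 0) (a : Cl m) :
    wedge m x y * a = (-((nrm x * nrm y : ℝ) : ℂ)) •
      (vec m ((nrm y)⁻¹ • y) * (vec m ((nrm x)⁻¹ • x) * a)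
        + (ip ((nrm x)⁻¹ • x) ((nrm y)⁻¹ • y) : ℂ) • a) := by
  have hnx := nrm_pos hx
  have hny := nrm_pos hy
  have hscale : (nrm x * nrm y) * ((nrm y)⁻¹ * (nrm x)⁻¹) = 1 := by field_simp
  have hip : (nrm x * nrm y) * (ip x y / (nrm x * nrm y)) = ip x y := by field_simp
  rw [wedge_eq, ip_normalize, sub_mul, neg_mul, mul_assoc, smul_one_mul, vec_smul, vec_smul,
    smul_mul_assoc, smul_mul_assoc, mul_smul_comm, neg_smul, ofReal_smul, ofReal_smul, ofReal_smul,
    smul_add, smul_smul, smul_smul, smul_smul, mul_assoc _ (nrm y)⁻¹, hscale, hip, one_smul,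
    neg_add, sub_eq_add_neg]

lemma Kminus_mul (x y : Fin m → ℝ) (a : Cl m) :
    Kminus m x y * a
      = (AfunR (Complex.I ^ m) (((m : ℝ) - 2) / 2) (ip ((nrm x)⁻¹ • x) ((nrm y)⁻¹ • y))
            (nrm x * nrm y)
          + BfunR (Complex.I ^ m) (((m : ℝ) - 2) / 2) (ip ((nrm x)⁻¹ • x) ((nrm y)⁻¹ • y))
            (nrm x * nrm y)) • a
        + CfunR (Complex.I ^ m) (((m : ℝ) - 2) / 2) (ip ((nrm x)⁻¹ • x) ((nrm y)⁻¹ • y))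
            (nrm x * nrm y) • (wedge m x y * a) := by
  rw [Kminus, ip_normalize, add_mul, smul_mul_assoc, smul_mul_assoc, one_mul]

lemma hasSum_kernelTerm (hm : 2 ≤ m) (hx : x ≠ 0) (hy : y ≠ 0) (a : Cl m) :
    HasSum (fun k => kernelTerm k x y a) (Kminus m x y * a) := by
  have hz : 0 < nrm x * nrm y := mul_pos (nrm_pos hx) (nrm_pos hy)
  have hw := abs_ip_normalize_le x y
  have hsum := (((hasSum_AfunR (u := Complex.I ^ m) hm rfl hw hz.le).add
    (hasSum_BfunR (u := Complex.I ^ m) hm rfl hw hz.le)).smul_const a).add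
      ((hasSum_CfunR (u := Complex.I ^ m) hm rfl hw hz).smul_const (wedge m x y * a))
  rw [← Kminus_mul] at hsum
  convert hsum using 2 with k
  rw [wedge_mul_eq hx hy, kernelTerm, kernelAngular, kernelRadial]
  generalize nrm x * nrm y = z at hz ⊢
  generalize ((m : ℝ) - 2) / 2 = lam
  generalize ip _ _ = w
  have hz' : (z : ℂ) ≠ 0 := by exact_mod_cast hz.ne'
  rw [geg_eq_gegShift, gegT_eq_gegShift, Real.rpow_sub_one two_ne_zero, ← ofReal_smul]
  push_cast
  match_scalars <;> field_simp
  ring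

end Kernel

/-! ### Angular integrals of the kernel -/

section Angular

open scoped Cl

lemma shift_zero {α : Type*} [Zero α] (f : ℕ → α) (k : ℕ) : shift 0 f k = f k := by simp [shift]

lemma shift_one_evenGap (l k : ℕ) : shift 1 (evenGap l) k = evenGap (l + 1) k := by
  cases k with
  | zero => simp [shift, evenGap]
  | succ k => simp [shift, evenGap_succ_succ]

lemma shift_one_evenGap_succ (l k : ℕ) : shift 1 (evenGap (l + 1)) k = shift 2 (evenGap l) k := by
  match k with
  | 0 | 1 | k + 2 => simp [shift, evenGap]

lemma evenGap_eq_shift_two_add (l k : ℕ) :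
    evenGap l k = shift 2 (evenGap l) k + if k = l then 1 else 0 := by
  match k with
  | 0 => simp [shift, evenGap, eq_comm]
  | 1 => rcases l with _ | _ | l <;> simp [shift, evenGap]
  | k + 2 => simp [shift, evenGap_add_two]

variable {η : Fin m → ℝ} {l d d' : ℕ} {M P Q : (Fin m → ℝ) → Cl m}

lemma continuous_gegShift_ip_smul (hP : Continuous P) (mu : ℝ) (j k : ℕ) (η : Fin m → ℝ) :
    Continuous fun x => gegShift mu j k (ip x η) • P x :=
  ((continuous_gegShift mu j k).comp (continuous_ip_left η)).smul hP

lemma IsSolidHarmonic.sphereIntegral_gegShift_smul (hm : 2 ≤ m) (hP : IsSolidHarmonic d P)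
    (hη : ip η η = 1) (j k : ℕ) :
    sphereIntegral (fun x => gegShift (((m : ℝ) - 2) / 2 + 1) j k (ip x η) • P x)
      = (sphereArea (((m : ℝ) - 2) / 2) * shift j (evenGap d) k) • P η := by
  unfold gegShift shift
  split_ifs
  · exact hP.sphereIntegral_geg_smul hm hη (k - j)
  · simp [sphereIntegral]

lemma sphereIntegral_congr {V : Type*} [NormedAddCommGroup V] [NormedSpace ℝ V]
    {g h : (Fin m → ℝ) → V} (hgh : ∀ x, ip x x = 1 → g x = h x) :
    sphereIntegral g = sphereIntegral h :=
  integral_congr_ae <| ae_of_all _ fun ξ => hgh _ (ip_self_of_nrm_eq_one (nrm_ofLp_sphere ξ))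

lemma vec_mul_eq_neg_of_vec_mul_eq {ε : ℝ} (hη : ip η η = 1)
    (hPQ : vec m η * P η = ε • Q η) : ε • (vec m η * Q η) = -P η := by
  rw [← mul_smul_comm, ← hPQ, ← mul_assoc, vec_mul_self, hη, Complex.ofReal_one, one_smul,
    neg_one_mul]

lemma kernelAngular_eq {ε : ℝ} {ξ : Fin m → ℝ} (hPQ : vec m ξ * P ξ = ε • Q ξ) (u : ℂ) (lam : ℝ)
    (k : ℕ) (η : Fin m → ℝ) :
    kernelAngular u lam k η ξ (P ξ)
      = ((-1 : ℂ) ^ k • (gegShift (lam + 1) 0 k (ip ξ η) • P ξ)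
          + u • (gegShift (lam + 1) 2 k (ip ξ η) • P ξ))
        + ((u + (-1) ^ k) * ε) • (mulCLM m (vec m η)) (gegShift (lam + 1) 1 k (ip ξ η) • Q ξ) := by
  rw [kernelAngular, hPQ, mulCLM_apply, mul_smul_comm, mul_smul_comm]
  simp only [← ofReal_smul]
  module

lemma sphereIntegral_kernelAngular (hm : 2 ≤ m) (hη : ip η η = 1) (u : ℂ) (k : ℕ)
    (hP : IsSolidHarmonic d P) (hQ : IsSolidHarmonic d' Q) {ε : ℝ}
    (hPQ : ∀ x, ip x x = 1 → vec m x * P x = ε • Q x) :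
    sphereIntegral (fun ξ => kernelAngular u (((m : ℝ) - 2) / 2) k η ξ (P ξ))
      = ((sphereArea (((m : ℝ) - 2) / 2) : ℂ) * ((-1) ^ k * shift 0 (evenGap d) k
          + u * shift 2 (evenGap d) k - (u + (-1) ^ k) * shift 1 (evenGap d') k)) • P η := by
  have hintP (j : ℕ) := integrable_sphere
    (continuous_gegShift_ip_smul hP.contDiff.continuous (((m : ℝ) - 2) / 2 + 1) j k η)
  have hintQ := integrable_sphere
    (continuous_gegShift_ip_smul hQ.contDiff.continuous (((m : ℝ) - 2) / 2 + 1) 1 k η)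
  have hsP (j : ℕ) := hP.sphereIntegral_gegShift_smul hm hη j k
  have hsQ := hQ.sphereIntegral_gegShift_smul hm hη 1 k
  rw [sphereIntegral_congr fun ξ hξ => kernelAngular_eq (hPQ ξ hξ) u _ k η]
  unfold sphereIntegral at hsP hsQ ⊢
  beta_reduce at hsP hsQ ⊢
  have hint0 := (hintP 0).fun_smul ((-1 : ℂ) ^ k)
  have hint2 := (hintP 2).fun_smul u
  have hint1 := ((mulCLM m (vec m η)).integrable_comp hintQ).fun_smul ((u + (-1) ^ k) * (ε : ℂ))
  rw [integral_add (hint0.fun_add hint2) hint1, integral_add hint0 hint2, integral_smul,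
    integral_smul, integral_smul, (mulCLM m (vec m η)).integral_comp_comm hintQ, hsP, hsP, hsQ,
    map_smul, mulCLM_apply, mul_smul _ (ε : ℂ), ofReal_smul, smul_comm ε,
    vec_mul_eq_neg_of_vec_mul_eq hη (hPQ η hη)]
  simp only [← ofReal_smul]
  push_cast
  module

lemma IsSphericalMonogenic.sphereIntegral_kernelAngular (hm : 2 ≤ m) (hη : ip η η = 1)
    (hM : IsSphericalMonogenic l M) (u : ℂ) (k : ℕ) :
    sphereIntegral (fun ξ => kernelAngular u (((m : ℝ) - 2) / 2) k η ξ (M ξ))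
      = if k = l then ((sphereArea (((m : ℝ) - 2) / 2) : ℂ) * (-1) ^ l) • M η else 0 := by
  rw [CliffordFourier.sphereIntegral_kernelAngular hm hη u k hM.isSolidHarmonic
    hM.isSolidHarmonic_vec_mul (ε := 1) (fun x _ => (one_smul _ _).symm), shift_one_evenGap_succ,
    shift_zero, evenGap_eq_shift_two_add l k]
  split_ifs with hk
  · subst hk
    push_cast
    module
  · push_cast
    module

lemma IsSphericalMonogenic.sphereIntegral_kernelAngular_vec_mul (hm : 2 ≤ m) (hη : ip η η = 1)
    (hM : IsSphericalMonogenic l M) (u : ℂ) (k : ℕ) :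
    sphereIntegral (fun ξ => kernelAngular u (((m : ℝ) - 2) / 2) k η ξ (vec m ξ * M ξ))
      = if k = l + 1 then ((sphereArea (((m : ℝ) - 2) / 2) : ℂ) * -u) • (vec m η * M η) else 0 := by
  have hvec (x : Fin m → ℝ) (hx : ip x x = 1) : vec m x * (vec m x * M x) = (-1 : ℝ) • M x := by
    rw [← mul_assoc, vec_mul_self, hx, Complex.ofReal_one, one_smul, neg_one_mul, neg_one_smul]
  rw [CliffordFourier.sphereIntegral_kernelAngular hm hη u k hM.isSolidHarmonic_vec_mul
    hM.isSolidHarmonic hvec, shift_one_evenGap, shift_zero, evenGap_eq_shift_two_add (l + 1) k]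
  split_ifs with hk <;> push_cast <;> module

end Angular

/-! ### Integration of the kernel expansion term by term -/

section Transform

open scoped Cl

lemma exists_norm_vec_mul_le (m : ℕ) :
    ∃ B : ℝ, 0 ≤ B ∧ ∀ (x : Fin m → ℝ) (a : Cl m), ‖vec m x * a‖ ≤ B * nrm x * ‖a‖ := by
  refine ⟨‖mulCLM m‖ * ‖vecCLM m‖, by positivity, fun x a => ?_⟩
  calc ‖vec m x * a‖ ≤ ‖mulCLM m‖ * ‖vecCLM m x‖ * ‖a‖ := (mulCLM m).le_opNorm₂ (vecCLM m x) a
    _ ≤ ‖mulCLM m‖ * (‖vecCLM m‖ * nrm x) * ‖a‖ := by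
      gcongr
      exact ((vecCLM m).le_opNorm x).trans (by gcongr; exact norm_le_nrm x)
    _ = ‖mulCLM m‖ * ‖vecCLM m‖ * nrm x * ‖a‖ := by ring

lemma nrm_normalize_le_one (x : Fin m → ℝ) : nrm ((nrm x)⁻¹ • x) ≤ 1 := by
  rw [nrm_smul, abs_of_nonneg (inv_nonneg.mpr (nrm_nonneg x))]
  exact inv_mul_le_one

lemma exists_norm_vec_mul_vec_mul_le (m : ℕ) :
    ∃ B : ℝ, 0 ≤ B ∧ ∀ (η ξ : Fin m → ℝ) (a : Cl m), nrm η ≤ 1 → nrm ξ ≤ 1 →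
      ‖vec m η * (vec m ξ * a)‖ ≤ B * ‖a‖ := by
  obtain ⟨B, hB, hvec⟩ := exists_norm_vec_mul_le m
  refine ⟨B * 1 * (B * 1), by positivity, fun η ξ a hη hξ => ?_⟩
  calc ‖vec m η * (vec m ξ * a)‖ ≤ B * nrm η * ‖vec m ξ * a‖ := hvec η _
    _ ≤ B * 1 * (B * 1 * ‖a‖) := by
      gcongr
      exact (hvec ξ a).trans (by gcongr)
    _ = B * 1 * (B * 1) * ‖a‖ := by ring

lemma norm_smul_kernelAngular_le {u : ℂ} (hu : ‖u‖ = 1) {lam R D B : ℝ} {k : ℕ}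
    {η ξ : Fin m → ℝ} {a : Cl m} (hR : ∀ j, |R * gegShift (lam + 1) j k (ip ξ η)| ≤ D)
    (hvec : ‖vec m η * (vec m ξ * a)‖ ≤ B * ‖a‖) :
    ‖R • kernelAngular u lam k η ξ a‖ ≤ D * ((2 + 2 * B) * ‖a‖) := by
  have hD : 0 ≤ D := (abs_nonneg _).trans (hR 0)
  have hnorm (j : ℕ) : ‖((R * gegShift (lam + 1) j k (ip ξ η) : ℝ) : ℂ)‖ ≤ D := by
    rw [Complex.norm_real]
    exact hR j
  have hu' : ‖u + (-1) ^ k‖ ≤ 2 := (norm_add_neg_one_pow_le u k).trans_eq (by rw [hu]; norm_num)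
  set G : ℕ → ℂ := fun j => ((R * gegShift (lam + 1) j k (ip ξ η) : ℝ) : ℂ)
  calc ‖R • kernelAngular u lam k η ξ a‖
      = ‖((-1) ^ k * G 0 + u * G 2) • a + ((u + (-1) ^ k) * G 1) • (vec m η * (vec m ξ * a))‖ := by
        rw [kernelAngular, ← ofReal_smul]
        congr 1
        simp only [G]
        push_cast
        module
    _ ≤ (‖(-1 : ℂ) ^ k‖ * ‖G 0‖ + ‖u‖ * ‖G 2‖) * ‖a‖
          + ‖u + (-1) ^ k‖ * ‖G 1‖ * ‖vec m η * (vec m ξ * a)‖ := by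
        refine (norm_add_le _ _).trans ?_
        rw [norm_smul, norm_smul, norm_mul (u + _)]
        gcongr
        exact (norm_add_le _ _).trans_eq (by rw [norm_mul, norm_mul])
    _ ≤ (1 * D + 1 * D) * ‖a‖ + 2 * D * (B * ‖a‖) := by
        gcongr <;> first | exact hnorm _ | simp [hu]
    _ = D * ((2 + 2 * B) * ‖a‖) := by ring

lemma exists_norm_kernelTerm_le (hm : 2 ≤ m) (y : Fin m → ℝ) :
    ∃ (C : ℝ) (p : ℕ), ∀ (k : ℕ) (x : Fin m → ℝ) (a : Cl m),
      ‖kernelTerm k x y a‖ ≤ (((k : ℝ) + 1) ^ 2)⁻¹ * (C * ((1 + nrm x) ^ p * ‖a‖)) := by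
  obtain ⟨C, p, hC, hgeg⟩ := exists_abs_besselRadial_mul_gegShift_le hm
  obtain ⟨B, hB, hvec⟩ := exists_norm_vec_mul_vec_mul_le m
  set κ := 2 ^ (((m : ℝ) - 2) / 2) * Real.Gamma (((m : ℝ) - 2) / 2 + 1) with hκ
  refine ⟨|κ| * (C * (1 + nrm y) ^ p) * (2 + 2 * B), p, fun k x a => ?_⟩
  have hnx := nrm_nonneg x
  have hny := nrm_nonneg y
  have hterm := norm_smul_kernelAngular_le (u := Complex.I ^ m) (by simp)
    (fun j => hgeg j k _ _ (abs_ip_normalize_le x y) (mul_nonneg hnx hny))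
    (hvec _ _ a (nrm_normalize_le_one y) (nrm_normalize_le_one x))
  calc ‖kernelTerm k x y a‖
      ≤ |κ| * ((((k : ℝ) + 1) ^ 2)⁻¹ * (C * (1 + nrm x * nrm y) ^ p) * ((2 + 2 * B) * ‖a‖)) := by
        rw [kernelTerm, kernelRadial, ← hκ, mul_smul, norm_smul, Real.norm_eq_abs]
        gcongr
    _ ≤ |κ| * ((((k : ℝ) + 1) ^ 2)⁻¹ * (C * ((1 + nrm y) * (1 + nrm x)) ^ p)
          * ((2 + 2 * B) * ‖a‖)) := by
        gcongr
        linarith [mul_comm (nrm x) (nrm y)]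
    _ = _ := by
        rw [mul_pow]
        ring

variable {y : Fin m → ℝ} {a P : (Fin m → ℝ) → Cl m} {f₀ : ℝ → ℝ} {d l : ℕ}

lemma aestronglyMeasurable_kernelTerm (hm : 2 ≤ m) (ha : AEStronglyMeasurable a) (k : ℕ)
    (y : Fin m → ℝ) : AEStronglyMeasurable fun x => kernelTerm k x y (a x) := by
  have hm' : (2 : ℝ) ≤ m := by exact_mod_cast hm
  have hlam : 0 ≤ ((m : ℝ) - 2) / 2 := by linarith
  have hξ : AEStronglyMeasurable fun x : Fin m → ℝ => (nrm x)⁻¹ • x :=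
    continuous_nrm.measurable.inv.aestronglyMeasurable.smul continuous_id.aestronglyMeasurable
  have hgeg (j : ℕ) : AEStronglyMeasurable fun x : Fin m → ℝ => ((gegShift
      (((m : ℝ) - 2) / 2 + 1) j k (ip ((nrm x)⁻¹ • x) ((nrm y)⁻¹ • y)) : ℝ) : ℂ) :=
    (Complex.continuous_ofReal.comp ((continuous_gegShift _ j k).comp
      (continuous_ip_left _))).comp_aestronglyMeasurable hξ
  have hvec : AEStronglyMeasurable fun x =>
      vec m ((nrm y)⁻¹ • y) * (vec m ((nrm x)⁻¹ • x) * a x) :=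
    (mulCLM m).aestronglyMeasurable_comp₂ aestronglyMeasurable_const
      ((mulCLM m).aestronglyMeasurable_comp₂
        ((vecCLM m).continuous.comp_aestronglyMeasurable hξ) ha)
  have hradial : AEStronglyMeasurable fun x : Fin m → ℝ =>
      kernelRadial (((m : ℝ) - 2) / 2) k (nrm x * nrm y) :=
    (((measurable_besselRadial hlam k).comp
      (continuous_nrm.measurable.mul_const _)).const_mul _).aestronglyMeasurable
  exact hradial.smul (((((hgeg 0).const_mul _).add ((hgeg 2).const_mul _)).smul ha).add
    (((hgeg 1).const_mul _).smul hvec))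

/-- Integrability against all polynomial weights: a form of rapid decay that, unlike membership in
the Schwartz space, involves no derivatives. -/
def IsRapidlyIntegrable (a : (Fin m → ℝ) → Cl m) : Prop :=
  ∀ p : ℕ, Integrable fun x => (1 + nrm x) ^ p • a x

lemma norm_one_add_nrm_pow_smul (x : Fin m → ℝ) (p : ℕ) (b : Cl m) :
    ‖(1 + nrm x) ^ p • b‖ = (1 + nrm x) ^ p * ‖b‖ := by
  have hn := nrm_nonneg x
  rw [norm_smul, Real.norm_of_nonneg (by positivity)]

lemma IsRapidlyIntegrable.aestronglyMeasurable (ha : IsRapidlyIntegrable a) :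
    AEStronglyMeasurable a := by
  simpa using (ha 0).aestronglyMeasurable

lemma IsRapidlyIntegrable.hasSum_integral_kernelTerm (hm : 2 ≤ m) (hy : y ≠ 0)
    (ha : IsRapidlyIntegrable a) :
    HasSum (fun k => ∫ x, kernelTerm k x y (a x)) (∫ x, Kminus m x y * a x) := by
  have : NeZero m := ⟨by lia⟩
  obtain ⟨C, p, hle⟩ := exists_norm_kernelTerm_le hm y
  have hweight : Integrable fun x => (1 + nrm x) ^ p * ‖a x‖ := by
    simpa only [norm_one_add_nrm_pow_smul] using (ha p).norm
  have hbound (k : ℕ) : Integrable fun x =>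
      (((k : ℝ) + 1) ^ 2)⁻¹ * (C * ((1 + nrm x) ^ p * ‖a x‖)) :=
    (hweight.const_mul C).const_mul _
  have hint (k : ℕ) : Integrable fun x => kernelTerm k x y (a x) :=
    (hbound k).mono' (aestronglyMeasurable_kernelTerm hm ha.aestronglyMeasurable k y)
      (ae_of_all _ fun x => hle k x (a x))
  have hkernel : ∫ x, Kminus m x y * a x = ∫ x, ∑' k, kernelTerm k x y (a x) := by
    refine integral_congr_ae ?_
    filter_upwards [Measure.ae_ne volume 0] with x hx
    exact (hasSum_kernelTerm hm hx hy (a x)).tsum_eq.symm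
  rw [hkernel]
  refine hasSum_integral_of_summable_integral_norm hint
    (.of_nonneg_of_le (fun k => integral_nonneg fun x => norm_nonneg _) (fun k => ?_)
      (summable_inv_natCast_add_one_sq.mul_right (∫ x, C * ((1 + nrm x) ^ p * ‖a x‖))))
  rw [← integral_const_mul]
  exact integral_mono (hint k).norm (hbound k) fun x => hle k x (a x)

lemma kernelAngular_smul (u : ℂ) (lam : ℝ) (k : ℕ) (η ξ : Fin m → ℝ) (c : ℝ) (b : Cl m) :
    kernelAngular u lam k η ξ (c • b) = c • kernelAngular u lam k η ξ b := by
  rw [kernelAngular, kernelAngular, mul_smul_comm, mul_smul_comm]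
  simp only [← ofReal_smul]
  module

lemma IsSmoothHomogeneous.eq_nrm_pow_smul_normalize (hP : IsSmoothHomogeneous d P)
    {x : Fin m → ℝ} (hx : x ≠ 0) : P x = nrm x ^ d • P ((nrm x)⁻¹ • x) := by
  rw [← hP.map_smul, smul_inv_smul₀ (nrm_pos hx).ne']

lemma IsSmoothHomogeneous.integral_kernelTerm [NeZero m] (hP : IsSmoothHomogeneous d P) (k : ℕ)
    (y : Fin m → ℝ) (f₀ : ℝ → ℝ) :
    ∫ x, kernelTerm k x y (f₀ (nrm x) • P x)
      = (∫ r in Set.Ioi 0, r ^ (m - 1)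
          * (kernelRadial (((m : ℝ) - 2) / 2) k (r * nrm y) * (f₀ r * r ^ d))) •
        sphereIntegral fun ξ =>
          kernelAngular (Complex.I ^ m) (((m : ℝ) - 2) / 2) k ((nrm y)⁻¹ • y) ξ (P ξ) := by
  rw [← integral_comp_nrm_smul_comp_normalize]
  refine integral_congr_ae ?_
  filter_upwards [Measure.ae_ne volume 0] with x hx
  rw [hP.eq_nrm_pow_smul_normalize hx, smul_smul, kernelTerm, kernelAngular_smul, smul_smul]

lemma IsSmoothHomogeneous.integral_Kminus_mul (hm : 2 ≤ m) (hy : y ≠ 0)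
    (hP : IsSmoothHomogeneous d P) (ha : IsRapidlyIntegrable fun x => f₀ (nrm x) • P x) {v : Cl m}
    (hv : ∀ k, sphereIntegral (fun ξ => kernelAngular (Complex.I ^ m) (((m : ℝ) - 2) / 2) k
      ((nrm y)⁻¹ • y) ξ (P ξ)) = if k = d then v else 0) :
    ∫ x, Kminus m x y * (f₀ (nrm x) • P x)
      = (2 ^ (((m : ℝ) - 2) / 2) * Real.Gamma (((m : ℝ) - 2) / 2 + 1) *
          ∫ r in Set.Ioi 0, r ^ (m - 1 + d) * f₀ r * ((r * nrm y) ^ (-(((m : ℝ) - 2) / 2))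
            * besselJ (d + ((m : ℝ) - 2) / 2) (r * nrm y))) • v := by
  have : NeZero m := ⟨by lia⟩
  have hsum := ha.hasSum_integral_kernelTerm hm hy
  simp_rw [hP.integral_kernelTerm, hv, smul_ite, smul_zero] at hsum
  rw [hsum.unique (hasSum_single d fun k hk => if_neg hk), if_pos rfl, ← integral_const_mul]
  congr 1
  refine setIntegral_congr_fun measurableSet_Ioi fun r (hr : 0 < r) => ?_
  rw [rpow_neg_mul_besselJ _ _ (mul_pos hr (nrm_pos hy)), kernelRadial, pow_add]
  ring

lemma two_pi_rpow_mul_mul_sphereArea (hm : 2 ≤ m) :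
    (2 * Real.pi) ^ (-(m : ℝ) / 2) * (2 ^ (((m : ℝ) - 2) / 2) * Real.Gamma (((m : ℝ) - 2) / 2 + 1))
      * sphereArea (((m : ℝ) - 2) / 2) = 1 := by
  have hm' : (2 : ℝ) ≤ m := by exact_mod_cast hm
  have hpi := Real.pi_pos
  have hΓ : Real.Gamma ((m : ℝ) / 2) ≠ 0 := (Real.Gamma_pos_of_pos (by linarith)).ne'
  have hexp : ((m : ℝ) - 2) / 2 = m / 2 - 1 := by ring
  rw [sphereArea, hexp, sub_add_cancel, Real.mul_rpow two_pos.le hpi.le, neg_div,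
    Real.rpow_neg two_pos.le, Real.rpow_neg hpi.le, Real.rpow_sub_one two_ne_zero]
  field_simp

variable {M : (Fin m → ℝ) → Cl m}

lemma ip_normalize_self (hy : y ≠ 0) : ip ((nrm y)⁻¹ • y) ((nrm y)⁻¹ • y) = 1 :=
  ip_self_of_nrm_eq_one (nrm_inv_nrm_smul hy)

lemma IsSphericalMonogenic.cliffordFourier_smul (hm : 2 ≤ m) (hM : IsSphericalMonogenic l M)
    (ha : IsRapidlyIntegrable fun x => f₀ (nrm x) • M x) (hy : y ≠ 0) :
    ((2 * Real.pi) ^ (-(m : ℝ) / 2)) • ∫ x, Kminus m x y * (f₀ (nrm x) • M x)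
      = ((-1 : ℝ) ^ l * ∫ r in Set.Ioi 0, r ^ (m + l - 1) * f₀ r *
          ((r * nrm y) ^ (-(((m : ℝ) - 2) / 2)) * besselJ (l + ((m : ℝ) - 2) / 2) (r * nrm y))) •
        M ((nrm y)⁻¹ • y) := by
  rw [hM.integral_Kminus_mul hm hy ha
    (hM.sphereIntegral_kernelAngular hm (ip_normalize_self hy) _), Nat.sub_add_comm (by lia)]
  have hconst := congrArg ((↑) : ℝ → ℂ) (two_pi_rpow_mul_mul_sphereArea hm)
  push_cast at hconst
  generalize ∫ r in Set.Ioi (0 : ℝ), (_ : ℝ) = X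
  simp only [← ofReal_smul, smul_smul]
  congr 1
  push_cast
  linear_combination (X * (-1 : ℂ) ^ l) * hconst

lemma IsSphericalMonogenic.cliffordFourier_smul_vec_mul (hm : 2 ≤ m)
    (hM : IsSphericalMonogenic l M)
    (ha : IsRapidlyIntegrable fun x => f₀ (nrm x) • (vec m x * M x)) (hy : y ≠ 0) :
    ((2 * Real.pi) ^ (-(m : ℝ) / 2)) • ∫ x, Kminus m x y * (f₀ (nrm x) • (vec m x * M x))
      = (-(Complex.I ^ m) * ((∫ r in Set.Ioi 0, r ^ (m + l) * f₀ r *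
          ((r * nrm y) ^ (-(((m : ℝ) - 2) / 2)) * besselJ (l + 1 + ((m : ℝ) - 2) / 2) (r * nrm y)) :
            ℝ) : ℂ)) • (vec m ((nrm y)⁻¹ • y) * M ((nrm y)⁻¹ • y)) := by
  have hdeg : m - 1 + (l + 1) = m + l := by lia
  rw [hM.vec_mul.integral_Kminus_mul hm hy ha
    (hM.sphereIntegral_kernelAngular_vec_mul hm (ip_normalize_self hy) _), hdeg, Nat.cast_succ]
  have hconst := congrArg ((↑) : ℝ → ℂ) (two_pi_rpow_mul_mul_sphereArea hm)
  push_cast at hconst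
  generalize ∫ r in Set.Ioi (0 : ℝ), (_ : ℝ) = X
  simp only [← ofReal_smul, smul_smul]
  congr 1
  push_cast
  linear_combination (-X * Complex.I ^ m) * hconst

end Transform

/-! ### Integrability against polynomial weights -/

section RapidlyIntegrable

open scoped Cl

lemma nrm_le_mul_norm (x : Fin m → ℝ) : nrm x ≤ m * ‖x‖ := by
  have hip : ip x x ≤ m * ‖x‖ ^ 2 := by
    have hle : ip x x ≤ ∑ _i : Fin m, ‖x‖ ^ 2 := Finset.sum_le_sum fun i _ => by
      rw [← sq, ← sq_abs]
      gcongr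
      exact norm_le_pi_norm x i
    simpa using hle
  have hm : (m : ℝ) ≤ (m : ℝ) ^ 2 := by exact_mod_cast Nat.le_self_pow two_ne_zero m
  refine Real.sqrt_le_iff.mpr ⟨by positivity, hip.trans ?_⟩
  rw [mul_pow]
  gcongr

lemma isRapidlyIntegrable_schwartzMap (φ : SchwartzMap (Fin m → ℝ) (Cl m)) :
    IsRapidlyIntegrable φ := by
  intro p
  have hbound : Integrable fun x => 2 ^ (p - 1) * (‖x‖ ^ 0 * ‖φ x‖ + m ^ p * (‖x‖ ^ p * ‖φ x‖)) :=
    ((φ.integrable_pow_mul volume 0).add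
      ((φ.integrable_pow_mul volume p).const_mul _)).const_mul _
  refine hbound.mono' (((continuous_const.add continuous_nrm).pow p).smul
    φ.continuous).aestronglyMeasurable (ae_of_all _ fun x => ?_)
  have hn := nrm_nonneg x
  rw [norm_one_add_nrm_pow_smul]
  calc (1 + nrm x) ^ p * ‖φ x‖
      ≤ 2 ^ (p - 1) * (1 ^ p + nrm x ^ p) * ‖φ x‖ := by
        gcongr
        exact add_pow_le zero_le_one hn p
    _ ≤ 2 ^ (p - 1) * (1 ^ p + (m * ‖x‖) ^ p) * ‖φ x‖ := by
        gcongr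
        exact nrm_le_mul_norm x
    _ = _ := by ring

lemma IsRapidlyIntegrable.vec_mul {a : (Fin m → ℝ) → Cl m} (ha : IsRapidlyIntegrable a) :
    IsRapidlyIntegrable fun x => vec m x * a x := by
  intro p
  obtain ⟨B, hB, hvec⟩ := exists_norm_vec_mul_le m
  have hmeas : AEStronglyMeasurable fun x => vec m x * a x :=
    (mulCLM m).aestronglyMeasurable_comp₂ (vecCLM m).continuous.aestronglyMeasurable
      ha.aestronglyMeasurable
  refine ((ha (p + 1)).norm.const_mul B).mono' (((continuous_const.add
    continuous_nrm).pow p).aestronglyMeasurable.smul hmeas) (ae_of_all _ fun x => ?_)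
  have hn := nrm_nonneg x
  rw [norm_one_add_nrm_pow_smul, norm_one_add_nrm_pow_smul]
  calc (1 + nrm x) ^ p * ‖vec m x * a x‖ ≤ (1 + nrm x) ^ p * (B * (1 + nrm x) * ‖a x‖) := by
        gcongr
        exact (hvec x (a x)).trans (by gcongr; linarith)
    _ = B * ((1 + nrm x) ^ (p + 1) * ‖a x‖) := by ring

end RapidlyIntegrable

open scoped Cl in
open scoped Cl in
theorem clifford_fourier_spherical_monogenic_general (hm : 2 ≤ m) {ℓ : ℕ}
    {M : (Fin m → ℝ) → Cl m} (hM : IsSphericalMonogenic ℓ M) {f₀ : ℝ → ℝ}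
    (hf : IsRapidlyIntegrable fun x => f₀ (nrm x) • M x) {y : Fin m → ℝ} (hy : y ≠ 0) :
    ((2 * Real.pi) ^ (-(m : ℝ) / 2)) • ∫ x, Kminus m x y * (f₀ (nrm x) • M x)
      = ((-1 : ℝ) ^ ℓ * ∫ r in Set.Ioi 0, r ^ (m + ℓ - 1) * f₀ r *
          ((r * nrm y) ^ (-(((m : ℝ) - 2) / 2)) * besselJ (ℓ + ((m : ℝ) - 2) / 2) (r * nrm y))) •
        M ((nrm y)⁻¹ • y) ∧
    ((2 * Real.pi) ^ (-(m : ℝ) / 2)) • ∫ x, Kminus m x y * (f₀ (nrm x) • (vec m x * M x))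
      = (-(Complex.I ^ m) * ((∫ r in Set.Ioi 0, r ^ (m + ℓ) * f₀ r *
          ((r * nrm y) ^ (-(((m : ℝ) - 2) / 2)) * besselJ (ℓ + 1 + ((m : ℝ) - 2) / 2) (r * nrm y)) :
            ℝ) : ℂ)) • (vec m ((nrm y)⁻¹ • y) * M ((nrm y)⁻¹ • y)) :=
  ⟨hM.cliffordFourier_smul hm hf hy,
    hM.cliffordFourier_smul_vec_mul hm (by simpa only [mul_smul_comm] using hf.vec_mul) hy⟩

/-- For a spherical monogenic `M_ℓ` of degree `ℓ` (a smooth, degree-`ℓ` homogeneous,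
Clifford-algebra-valued function in the kernel of the Dirac operator) and a radial
profile `f₀` with `f₀(|x|)M_ℓ(x)` Schwartz, the Clifford-Fourier transform acts as a
Hankel-type transform:
`F_-(f₀(r)M_ℓ)(y) = (-1)^ℓ M_ℓ(η) ∫₀^∞ r^{m+ℓ-1} f₀(r) z^{-λ} J_{ℓ+λ}(z) dr` and
`F_-(f₀(r) x M_ℓ)(y) = -i^m η M_ℓ(η) ∫₀^∞ r^{m+ℓ} f₀(r) z^{-λ} J_{ℓ+1+λ}(z) dr`,
with `η = y/|y|`, `z = r|y|`, `λ = (m-2)/2`. -/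
theorem clifford_fourier_spherical_monogenic (m : ℕ) (hm : 2 ≤ m) (ℓ : ℕ)
    (M : (Fin m → ℝ) → Cl m) (hM : ContDiff ℝ ⊤ M)
    (hhom : ∀ (c : ℝ) (x : Fin m → ℝ), M (c • x) = c^ℓ • M x)
    (hmono : ∀ x, dirac M x = 0)
    (f₀ : ℝ → ℝ)
    (hf : ∃ φ : SchwartzMap (Fin m → ℝ) (Cl m), ∀ x, φ x = f₀ (nrm x) • M x)
    (y : Fin m → ℝ) (hy : y ≠ 0) :
    ((2*Real.pi) ^ (-(m:ℝ)/2)) • (∫ x : Fin m → ℝ, Kminus m x y * (f₀ (nrm x) • M x))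
      = ((-1 : ℝ)^ℓ *
          ∫ r in Set.Ioi (0:ℝ), (r^(m + ℓ - 1) * f₀ r *
            ((r * nrm y) ^ (-(((m:ℝ) - 2)/2)) *
              besselJ ((ℓ:ℝ) + ((m:ℝ) - 2)/2) (r * nrm y)))) • M ((nrm y)⁻¹ • y) ∧
    ((2*Real.pi) ^ (-(m:ℝ)/2)) •
        (∫ x : Fin m → ℝ, Kminus m x y * (f₀ (nrm x) • (vec m x * M x)))
      = (-(Complex.I^m) *
          ((∫ r in Set.Ioi (0:ℝ), (r^(m + ℓ) * f₀ r *
            ((r * nrm y) ^ (-(((m:ℝ) - 2)/2)) *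
              besselJ ((ℓ:ℝ) + 1 + ((m:ℝ) - 2)/2) (r * nrm y))) : ℝ) : ℂ)) •
          (vec m ((nrm y)⁻¹ • y) * M ((nrm y)⁻¹ • y)) := by
  obtain ⟨φ, hφ⟩ := hf
  exact clifford_fourier_spherical_monogenic_general hm ⟨⟨hM.of_le le_top, hhom⟩, hmono⟩
    (funext hφ ▸ isRapidlyIntegrable_schwartzMap φ) hy

end CliffordFourier
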